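/- arXiv:2602.00906 — 3 statements merged into one kernel-verified Lean document; each statement's English description precedes it below -/
import Mathlib

section
/- Fix error metrics d^K, d^N satisfying the stated assumptions and error levels εK, εN ≥ 0. Let p_j ∈ (0,1) with p_j → 0, and let μ_{K,j}, μ_{N,j} ∈ P([0,1]) satisfy limsup_{j→∞} E_{X∼μ_{K,j}}[d^K(X)] ≤ εK and limsup_{j→∞} E_{X∼μ_{N,j}}[d^N(X)] ≤ εN. Then liminf_{j→∞} F_{p_j}(μ_{K,j}, μ_{N,j}) ≥ min over (μK, μN) ∈ C_K(εK) × C_N(εN) of KL(μK ‖ μN), and this minimum is attained. -/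
/- STATEMENT 5: In the sparse limit p_j → 0, for sequences of probability measures
   asymptotically satisfying the error constraints, liminf_j F_{p_j}(μ_{K,j}, μ_{N,j})
   is at least the minimum of KL(μK ‖ μN) over the feasible region, and this minimum
   is attained. -/

open MeasureTheory Filter Topology
open scoped ENNReal

abbrev I01 : Set ℝ := Set.Icc 0 1

open Classical in
/-- Kullback–Leibler divergence with logarithm base 2, valued in `EReal`. -/
noncomputable def klDiv2 {α : Type*} [MeasurableSpace α] (μ ν : Measure α) : EReal :=
  if μ ≪ ν ∧ Integrable (fun x => Real.logb 2 ((μ.rnDeriv ν x).toReal)) μ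
  then ((∫ x, Real.logb 2 ((μ.rnDeriv ν x).toReal) ∂μ : ℝ) : EReal)
  else ⊤

noncomputable def mix {α : Type*} [MeasurableSpace α] (p : ℝ) (μ ν : Measure α) : Measure α :=
  (ENNReal.ofReal p) • μ + (ENNReal.ofReal (1 - p)) • ν

/-- `F_p(μK, μN)`, with `F_0(μK, μN) = KL(μK ‖ μN)`. -/
noncomputable def Fp {α : Type*} [MeasurableSpace α] (p : ℝ) (μK μN : Measure α) : EReal :=
  if p = 0 then klDiv2 μK μN
  else klDiv2 μK (mix p μK μN) + (((1 - p) / p : ℝ) : EReal) * klDiv2 μN (mix p μK μN)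


open InformationTheory

lemma dv_pointwise (r t : ℝ) (hr : 0 ≤ r) : r * t - (Real.exp t - 1) ≤ klFun r := by
  unfold klFun
  rcases hr.eq_or_lt with h | h
  · subst h
    have := Real.exp_pos t
    simp
    linarith
  · have h1 := Real.add_one_le_exp (t - Real.log r)
    rw [Real.exp_sub, Real.exp_log h, le_div_iff₀ h] at h1
    nlinarith

lemma dv_forward {α : Type*} [MeasurableSpace α] (μ ν : Measure α) [IsProbabilityMeasure μ]
    [IsProbabilityMeasure ν] (a : ℝ) (ha : 0 ≤ a) (h : klDiv μ ν ≤ ENNReal.ofReal a)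
    (f : α → ℝ) (hf : Integrable f μ) (hef : Integrable (fun x => Real.exp (f x)) ν) :
    ∫ x, f x ∂μ - ∫ x, (Real.exp (f x) - 1) ∂ν ≤ a := by
  have hne : klDiv μ ν ≠ ⊤ := ne_top_of_le_ne_top ENNReal.ofReal_ne_top h
  obtain ⟨hac, hint⟩ := klDiv_ne_top_iff.1 hne
  have h1 : (klDiv μ ν).toReal ≤ a := ENNReal.toReal_le_of_le_ofReal ha h
  rw [toReal_klDiv_eq_integral_klFun hac] at h1
  refine le_trans ?_ h1
  have hfi : Integrable (fun x => (μ.rnDeriv ν x).toReal * f x) ν := by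
    simpa using (integrable_rnDeriv_smul_iff hac).2 hf
  have he1 : Integrable (fun x => Real.exp (f x) - 1) ν := hef.sub (integrable_const 1)
  rw [← integral_rnDeriv_smul hac]
  simp only [smul_eq_mul]
  rw [← integral_sub hfi he1]
  refine integral_mono (hfi.sub he1)
    ((integrable_klFun_rnDeriv_iff hac).2 hint) ?_
  intro x
  exact dv_pointwise _ _ ENNReal.toReal_nonneg

/-- the clipping function -/
noncomputable def clipE (n : ℕ) (r : ℝ) : ℝ := max (Real.exp (-n)) (min r (Real.exp n))

lemma clipE_pos (n : ℕ) (r : ℝ) : 0 < clipE n r := lt_max_of_lt_left (Real.exp_pos _)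

lemma clipE_le (n : ℕ) (r : ℝ) : clipE n r ≤ Real.exp n :=
  max_le (Real.exp_le_exp.2 (by linarith [(Nat.cast_nonneg n : (0:ℝ) ≤ n)])) (min_le_right _ _)

lemma le_clipE (n : ℕ) (r : ℝ) : Real.exp (-n) ≤ clipE n r := le_max_left _ _

lemma abs_log_clipE (n : ℕ) (r : ℝ) : |Real.log (clipE n r)| ≤ n := by
  rw [abs_le]
  constructor
  · rw [Real.le_log_iff_exp_le (clipE_pos _ _)]; exact le_clipE _ _
  · rw [Real.log_le_iff_le_exp (clipE_pos _ _)]; exact clipE_le _ _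

lemma clipE_nonneg_int (n : ℕ) (r : ℝ) :
    0 ≤ r * Real.log (clipE n r) - (clipE n r - 1) := by
  have h1 : clipE n r * Real.log (clipE n r) ≤ r * Real.log (clipE n r) := by
    have hn : (0:ℝ) ≤ n := Nat.cast_nonneg n
    rcases le_total r (clipE n r) with h | h
    · rcases h.eq_or_lt with h | h
      · rw [← h]
      · have : clipE n r ≤ 1 := by
          by_contra hc
          push Not at hc
          unfold clipE at h hc
          have : Real.exp (-n) ≤ 1 := by rw [Real.exp_le_one_iff]; linarith
          rcases lt_max_iff.1 hc with h' | h'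
          · linarith
          · rw [max_eq_right (by linarith)] at h
            exact absurd (min_le_left r (Real.exp n)) (not_le.2 h)
        have := Real.log_nonpos (clipE_pos n r).le this
        nlinarith
    · rcases h.eq_or_lt with h | h
      · rw [h]
      · have : 1 ≤ clipE n r := by
          unfold clipE at h ⊢
          have h2 : 1 ≤ Real.exp n := by rw [Real.one_le_exp_iff]; exact hn
          have h3 := (max_lt_iff.1 h).2
          rcases min_lt_iff.1 h3 with h' | h'
          · exact absurd h' (lt_irrefl _)
          · exact le_max_of_le_right (le_min (by linarith) h2)
        have := Real.log_nonneg this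
        nlinarith
  have := klFun_nonneg (clipE_pos n r).le
  unfold klFun at this
  linarith

lemma clipE_tendsto (r : ℝ) (hr : 0 ≤ r) :
    Tendsto (fun n : ℕ => r * Real.log (clipE n r) - (clipE n r - 1)) atTop (𝓝 (klFun r)) := by
  have he : Tendsto (fun n : ℕ => Real.exp (-(n:ℝ))) atTop (𝓝 0) :=
    Real.tendsto_exp_neg_atTop_nhds_zero.comp tendsto_natCast_atTop_atTop
  have he2 : Tendsto (fun n : ℕ => Real.exp (n:ℝ)) atTop atTop :=
    Real.tendsto_exp_atTop.comp tendsto_natCast_atTop_atTop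
  rcases hr.eq_or_lt with h | h
  · subst h
    have : ∀ n : ℕ, clipE n 0 = Real.exp (-(n:ℝ)) := fun n => by
      unfold clipE
      rw [min_eq_left (Real.exp_pos _).le, max_eq_left (Real.exp_pos _).le]
    simp only [this, zero_mul, klFun_zero]
    have := (tendsto_const_nhds (x := (0:ℝ))).sub (he.sub_const 1)
    simpa using this
  · refine tendsto_const_nhds.congr' ?_
    filter_upwards [he.eventually_lt_const h, he2.eventually_ge_atTop r] with n h1 h2
    have : clipE n r = r := by
      unfold clipE
      rw [min_eq_left h2, max_eq_right h1.le]
    rw [this]; unfold klFun; ring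

lemma measurable_clipE (n : ℕ) : Measurable (clipE n) := by unfold clipE; fun_prop

lemma dv_backward_meas {α : Type*} [MeasurableSpace α] (μ ν : Measure α) [IsProbabilityMeasure μ]
    [IsProbabilityMeasure ν] (a : ℝ)
    (h : ∀ f : α → ℝ, Measurable f → (∃ M, ∀ x, |f x| ≤ M) →
      ∫ x, f x ∂μ - ∫ x, (Real.exp (f x) - 1) ∂ν ≤ a) :
    klDiv μ ν ≤ ENNReal.ofReal a := by
  have hac : μ ≪ ν := by
    refine Measure.AbsolutelyContinuous.mk fun s hs hν => ?_
    by_contra hμ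
    have hpos : 0 < μ.real s := by
      rw [measureReal_def]; exact ENNReal.toReal_pos hμ (measure_ne_top _ _)
    obtain ⟨n, hn⟩ := exists_nat_gt (a / μ.real s)
    rw [div_lt_iff₀ hpos] at hn
    have := h (s.indicator fun _ => (n:ℝ)) (measurable_const.indicator hs)
      ⟨n, fun x => by by_cases hx : x ∈ s <;> simp [hx]⟩
    rw [integral_indicator hs] at this
    have h0 : ∫ x, (Real.exp (s.indicator (fun _ => (n:ℝ)) x) - 1) ∂ν = 0 := by
      refine integral_eq_zero_of_ae ?_
      have : ∀ᵐ x ∂ν, x ∉ s := measure_eq_zero_iff_ae_notMem.1 hν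
      filter_upwards [this] with x hx
      simp [hx]
    rw [h0] at this
    simp at this
    linarith
  rw [klDiv_eq_lintegral_klFun_of_ac hac]
  set g : ℕ → α → ℝ := fun n x => (μ.rnDeriv ν x).toReal *
    Real.log (clipE n (μ.rnDeriv ν x).toReal) - (clipE n (μ.rnDeriv ν x).toReal - 1) with hg
  have hgm : ∀ n, Measurable (g n) := fun n => by
    have := measurable_clipE n
    have h2 := (Measure.measurable_rnDeriv μ ν).ennreal_toReal
    have h3 := this.comp h2
    exact (h2.mul h3.log).sub (h3.sub_const 1)
  have hlim : ∀ x, ENNReal.ofReal (klFun (μ.rnDeriv ν x).toReal)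
      = liminf (fun n => ENNReal.ofReal (g n x)) atTop := fun x =>
    ((ENNReal.continuous_ofReal.tendsto _).comp
      (clipE_tendsto _ ENNReal.toReal_nonneg)).liminf_eq.symm
  simp_rw [hlim]
  refine (lintegral_liminf_le fun n => (hgm n).ennreal_ofReal).trans ?_
  refine liminf_le_of_le (by isBoundedDefault) fun b hb => ?_
  obtain ⟨n, hn⟩ := hb.exists
  refine hn.trans ?_
  have hfm : Measurable fun x => Real.log (clipE n (μ.rnDeriv ν x).toReal) :=
    ((measurable_clipE n).comp (Measure.measurable_rnDeriv μ ν).ennreal_toReal).log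
  have hfi : Integrable (fun x => Real.log (clipE n (μ.rnDeriv ν x).toReal)) μ :=
    Integrable.of_bound hfm.aestronglyMeasurable n (ae_of_all _ fun x => abs_log_clipE _ _)
  have hci : Integrable (fun x => clipE n (μ.rnDeriv ν x).toReal) ν :=
    Integrable.of_bound ((measurable_clipE n).comp
      (Measure.measurable_rnDeriv μ ν).ennreal_toReal).aestronglyMeasurable (Real.exp n)
      (ae_of_all _ fun x => by
        rw [Real.norm_eq_abs, abs_of_pos (clipE_pos _ _)]; exact clipE_le _ _)
  have hfi' := (integrable_rnDeriv_smul_iff hac).2 hfi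
  have hgi : Integrable (g n) ν := by
    refine Integrable.sub (by simpa using hfi') (hci.sub (integrable_const 1))
  rw [← ofReal_integral_eq_lintegral_ofReal hgi
    (ae_of_all _ fun x => clipE_nonneg_int _ _)]
  refine ENNReal.ofReal_le_ofReal ?_
  have := h _ hfm ⟨n, fun x => abs_log_clipE _ _⟩
  rw [← integral_rnDeriv_smul hac] at this
  simp_rw [Real.exp_log (clipE_pos _ _)] at this
  have hci1 : Integrable (fun x => clipE n (μ.rnDeriv ν x).toReal - 1) ν :=
    hci.sub (integrable_const 1)
  rw [← integral_sub hfi' hci1] at this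
  exact this


lemma exp_lip (M s t : ℝ) (hs : |s| ≤ M) (ht : |t| ≤ M) :
    |Real.exp s - Real.exp t| ≤ Real.exp M * |s - t| := by
  wlog h : t ≤ s generalizing s t
  · rw [abs_sub_comm, abs_sub_comm s]; exact this t s ht hs (le_of_not_ge h)
  rw [abs_of_nonneg (sub_nonneg.2 (Real.exp_le_exp.2 h)), abs_of_nonneg (sub_nonneg.2 h)]
  have h1 := Real.add_one_le_exp (t - s)
  have h2 : Real.exp t = Real.exp s * Real.exp (t - s) := by rw [← Real.exp_add]; ring_nf
  have h3 : Real.exp s ≤ Real.exp M := Real.exp_le_exp.2 (abs_le.1 hs).2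
  have h4 := Real.exp_pos s
  rw [h2]
  nlinarith

lemma clip_dist (M s t : ℝ) (hs : |s| ≤ M) : |s - max (-M) (min t M)| ≤ |s - t| := by
  obtain ⟨h1, h2⟩ := abs_le.1 hs
  rcases le_total t M with h | h
  · rw [min_eq_left h]
    rcases le_total (-M) t with h' | h'
    · rw [max_eq_right h']
    · rw [max_eq_left h', abs_of_nonneg (by linarith), abs_of_nonneg (by linarith)]; linarith
  · rw [min_eq_right h, max_eq_right (by linarith), abs_of_nonpos (by linarith),
      abs_of_nonpos (by linarith)]; linarith

lemma dv_cont_to_meas (μ ν : Measure I01) [IsProbabilityMeasure μ]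
    [IsProbabilityMeasure ν] (a : ℝ)
    (h : ∀ f : C(I01, ℝ), ∫ x, f x ∂μ - ∫ x, (Real.exp (f x) - 1) ∂ν ≤ a)
    (f : I01 → ℝ) (hf : Measurable f) (hM : ∃ M, ∀ x, |f x| ≤ M) :
    ∫ x, f x ∂μ - ∫ x, (Real.exp (f x) - 1) ∂ν ≤ a := by
  obtain ⟨M, hM⟩ := hM
  have hM0 : 0 ≤ M := (abs_nonneg _).trans (hM ⟨0, Set.left_mem_Icc.mpr zero_le_one⟩)
  have key : ∀ ε > 0, ∫ x, f x ∂μ - ∫ x, (Real.exp (f x) - 1) ∂ν ≤ a + (1 + Real.exp M) * ε := by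
    intro ε hε
    have hfi : Integrable f (μ + ν) :=
      Integrable.of_bound hf.aestronglyMeasurable M (ae_of_all _ hM)
    obtain ⟨g, hg, hgi⟩ := hfi.exists_boundedContinuous_integral_sub_le hε
    let k : C(I01, ℝ) := ⟨fun x => max (-M) (min (g x) M), by fun_prop⟩
    have hk : ∀ x, |k x| ≤ M := fun x => by
      simp only [k, ContinuousMap.coe_mk]
      rw [abs_le]
      exact ⟨le_max_left _ _, max_le (by linarith) (min_le_right _ _)⟩
    have hkm : Measurable k := k.continuous.measurable
    have bi : ∀ (ρ : Measure I01) [IsFiniteMeasure ρ] (u : I01 → ℝ), Measurable u →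
        (∀ x, |u x| ≤ M) → Integrable u ρ ∧ Integrable (fun x => Real.exp (u x) - 1) ρ := by
      intro ρ _ u hu hb
      refine ⟨Integrable.of_bound hu.aestronglyMeasurable M (ae_of_all _ hb), ?_⟩
      refine Integrable.sub ?_ (integrable_const 1)
      refine Integrable.of_bound hu.exp.aestronglyMeasurable (Real.exp M) (ae_of_all _ fun x => ?_)
      rw [Real.norm_eq_abs, Real.abs_exp]
      exact Real.exp_le_exp.2 (abs_le.1 (hb x)).2
    have hdi : Integrable (fun x => |f x - k x|) (μ + ν) :=
      ((bi _ f hf hM).1.sub (bi _ k hkm hk).1).abs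
    have hd : ∫ x, |f x - k x| ∂(μ + ν) ≤ ε := by
      refine le_trans (integral_mono hdi (hfi.sub hgi).norm fun x => ?_) hg
      exact clip_dist M _ _ (hM x)
    have hdμ : Integrable (fun x => |f x - k x|) μ := hdi.left_of_add_measure
    have hdν : Integrable (fun x => |f x - k x|) ν := hdi.right_of_add_measure
    rw [integral_add_measure hdμ hdν] at hd
    have p1 : 0 ≤ ∫ x, |f x - k x| ∂μ := integral_nonneg fun _ => abs_nonneg _
    have p2 : 0 ≤ ∫ x, |f x - k x| ∂ν := integral_nonneg fun _ => abs_nonneg _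
    have e1 : ∫ x, f x ∂μ ≤ ∫ x, k x ∂μ + ∫ x, |f x - k x| ∂μ := by
      rw [← integral_add (bi _ k hkm hk).1 hdμ]
      refine integral_mono (bi _ f hf hM).1 ((bi _ k hkm hk).1.add hdμ) fun x => ?_
      have := le_abs_self (f x - k x)
      beta_reduce
      linarith
    have e2 : ∫ x, (Real.exp (k x) - 1) ∂ν ≤
        ∫ x, (Real.exp (f x) - 1) ∂ν + Real.exp M * ∫ x, |f x - k x| ∂ν := by
      rw [← integral_const_mul, ← integral_add (bi _ f hf hM).2 (hdν.const_mul _)]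
      refine integral_mono (bi _ k hkm hk).2 ((bi _ f hf hM).2.add (hdν.const_mul _)) fun x => ?_
      have := exp_lip M _ _ (hk x) (hM x)
      rw [abs_sub_comm (k x)] at this
      have := (le_abs_self _).trans this
      beta_reduce
      linarith
    have := h k
    have := Real.exp_pos M
    nlinarith
  refine le_of_forall_pos_le_add fun δ hδ => ?_
  have hp : 0 < 1 + Real.exp M := by positivity
  have := key (δ / (1 + Real.exp M)) (by positivity)
  rwa [mul_div_cancel₀ _ hp.ne'] at this

lemma isClosed_lintegral (d : I01 → ℝ≥0∞) (hd : LowerSemicontinuous d) (ε : ℝ≥0∞) :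
    IsClosed {μ : ProbabilityMeasure I01 | ∫⁻ x, d x ∂(μ : Measure I01) ≤ ε} := by
  refine IsSeqClosed.isClosed fun μs μ hμs hlim => ?_
  have hdm : Measurable d := hd.measurable
  have hsup : ∀ x, d x = ⨆ n : ℕ, min (d x) n := fun x => by
    rw [← inf_iSup_eq, ENNReal.iSup_natCast]; simp
  change ∫⁻ x, d x ∂(μ : Measure I01) ≤ ε
  rw [lintegral_congr hsup]
  rw [lintegral_iSup (fun n => hdm.min measurable_const)
    (fun m n hmn x => min_le_min_left _ (by exact_mod_cast hmn))]
  refine iSup_le fun n => ?_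
  set f : I01 → ℝ := fun x => (min (d x) n).toReal with hf
  have hfn : ∀ x, min (d x) n ≠ ⊤ := fun x => ne_top_of_le_ne_top (by simp) (min_le_right _ _)
  have hfm : Measurable f := (hdm.min measurable_const).ennreal_toReal
  have hcake : ∀ ρ : Measure I01, ∫⁻ x, min (d x) n ∂ρ =
      ∫⁻ t in Set.Ioi (0:ℝ), ρ {x | t < f x} := fun ρ => by
    rw [← lintegral_eq_lintegral_meas_lt ρ (ae_of_all _ fun _ => ENNReal.toReal_nonneg)
      hfm.aemeasurable]
    refine lintegral_congr fun x => ?_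
    rw [ENNReal.ofReal_toReal (hfn x)]
  have hopen : ∀ t : ℝ, 0 < t → IsOpen {x | t < f x} := fun t ht => by
    have h1 : LowerSemicontinuous fun x => min (d x) n := hd.inf lowerSemicontinuous_const
    convert! h1.isOpen_preimage (ENNReal.ofReal t) using 1
    ext x
    simp only [Set.mem_setOf_eq, Set.mem_preimage, Set.mem_Ioi, f]
    rw [ENNReal.ofReal_lt_iff_lt_toReal ht.le (hfn x)]
  rw [hcake]
  have h1 : ∫⁻ t in Set.Ioi (0:ℝ), (μ : Measure I01) {x | t < f x} ≤
      ∫⁻ t in Set.Ioi (0:ℝ), liminf (fun j => (μs j : Measure I01) {x | t < f x}) atTop := by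
    refine setLIntegral_mono' measurableSet_Ioi fun t ht => ?_
    exact ProbabilityMeasure.le_liminf_measure_open_of_tendsto hlim (hopen t ht)
  refine h1.trans ((lintegral_liminf_le fun j => ?_).trans ?_)
  · exact Antitone.measurable fun s t hst => measure_mono fun x hx => lt_of_le_of_lt hst hx
  · refine liminf_le_of_le (by isBoundedDefault) fun b hb => ?_
    obtain ⟨j, hj⟩ := hb.exists
    refine hj.trans ?_
    rw [← hcake]
    exact (lintegral_mono fun x => min_le_left _ _).trans (hμs j)

lemma lsc_klDiv : LowerSemicontinuous
    (fun q : ProbabilityMeasure I01 × ProbabilityMeasure I01 =>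
      klDiv (q.1 : Measure I01) (q.2 : Measure I01)) := by
  rw [lowerSemicontinuous_iff_isClosed_preimage]
  intro b
  by_cases hb : b = ⊤
  · subst hb; simp
  have hset : (fun q : ProbabilityMeasure I01 × ProbabilityMeasure I01 =>
      klDiv (q.1 : Measure I01) (q.2 : Measure I01)) ⁻¹' Set.Iic b =
      ⋂ f : C(I01, ℝ), {q | ∫ x, f x ∂(q.1 : Measure I01) -
        ∫ x, (Real.exp (f x) - 1) ∂(q.2 : Measure I01) ≤ b.toReal} := by
    ext q
    simp only [Set.mem_preimage, Set.mem_Iic, Set.mem_iInter, Set.mem_setOf_eq]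
    rw [← ENNReal.ofReal_toReal hb]
    constructor
    · intro h f
      rw [ENNReal.ofReal_toReal hb]
      refine dv_forward _ _ _ ENNReal.toReal_nonneg h f ?_ ?_
      · exact f.continuous.integrable_of_hasCompactSupport (HasCompactSupport.of_compactSpace _)
      · exact (Real.continuous_exp.comp f.continuous).integrable_of_hasCompactSupport
          (HasCompactSupport.of_compactSpace _)
    · intro h
      rw [ENNReal.ofReal_toReal hb] at h
      exact dv_backward_meas _ _ _ (dv_cont_to_meas _ _ _ h)
  rw [hset]
  refine isClosed_iInter fun f => ?_
  have h1 : Continuous fun ρ : ProbabilityMeasure I01 => ∫ x, f x ∂(ρ : Measure I01) :=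
    ProbabilityMeasure.continuous_integral_continuousMap f
  have h2 : Continuous fun ρ : ProbabilityMeasure I01 =>
      ∫ x, (Real.exp (f x) - 1) ∂(ρ : Measure I01) :=
    ProbabilityMeasure.continuous_integral_continuousMap
      (⟨fun x => Real.exp (f x) - 1, by fun_prop⟩ : C(I01, ℝ))
  exact isClosed_le ((h1.comp continuous_fst).sub (h2.comp continuous_snd)) continuous_const

lemma klDiv2_eq {α : Type*} [MeasurableSpace α] (μ ν : Measure α) [IsProbabilityMeasure μ]
    [IsProbabilityMeasure ν] :
    klDiv2 μ ν = ((klDiv μ ν * ENNReal.ofReal (Real.log 2)⁻¹ : ℝ≥0∞) : EReal) := by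
  have hl : 0 < Real.log 2 := Real.log_pos one_lt_two
  have hfun : (fun x => Real.logb 2 ((μ.rnDeriv ν x).toReal)) =
      fun x => llr μ ν x * (Real.log 2)⁻¹ := by
    ext x; simp [Real.logb, llr, div_eq_mul_inv]
  have hiff : Integrable (fun x => Real.logb 2 ((μ.rnDeriv ν x).toReal)) μ ↔
      Integrable (llr μ ν) μ := by
    rw [hfun]
    exact integrable_mul_const_iff (IsUnit.mk0 _ (inv_pos.2 hl).ne') _
  unfold klDiv2
  rw [hiff]
  split_ifs with h
  · have h0 := integral_llr_add_sub_measure_univ_nonneg h.1 h.2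
    rw [klDiv_of_ac_of_integrable h.1 h.2, hfun, integral_mul_const]
    simp only [probReal_univ, add_sub_cancel_right] at h0 ⊢
    rw [← ENNReal.ofReal_mul h0, EReal.coe_ennreal_ofReal, max_eq_left]
    exact mul_nonneg h0 (inv_pos.2 hl).le
  · have : klDiv μ ν = ⊤ := by
      by_contra hc
      exact h (klDiv_ne_top_iff.1 hc)
    rw [this, ENNReal.top_mul (by simpa using hl)]
    rfl

lemma lsc_klDiv2 : LowerSemicontinuous
    (fun q : ProbabilityMeasure I01 × ProbabilityMeasure I01 =>
      klDiv2 (q.1 : Measure I01) (q.2 : Measure I01)) := by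
  simp_rw [klDiv2_eq]
  have hc : Continuous fun x : ℝ≥0∞ =>
      ((x * ENNReal.ofReal (Real.log 2)⁻¹ : ℝ≥0∞) : EReal) :=
    continuous_coe_ennreal_ereal.comp (ENNReal.continuous_mul_const ENNReal.ofReal_ne_top)
  exact hc.comp_lowerSemicontinuous lsc_klDiv fun x y hxy =>
    EReal.coe_ennreal_le_coe_ennreal_iff.2 (mul_le_mul_left hxy _)

lemma mix_prob {α : Type*} [MeasurableSpace α] (p : ℝ) (hp : p ∈ Set.Ioo (0:ℝ) 1)
    (μ ν : Measure α) [IsProbabilityMeasure μ] [IsProbabilityMeasure ν] :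
    IsProbabilityMeasure (mix p μ ν) := by
  constructor
  simp only [mix, Measure.add_apply, Measure.smul_apply, measure_univ, smul_eq_mul, mul_one]
  rw [← ENNReal.ofReal_add hp.1.le (by linarith [hp.2])]
  simp

lemma klDiv2_nonneg {α : Type*} [MeasurableSpace α] (μ ν : Measure α) [IsProbabilityMeasure μ]
    [IsProbabilityMeasure ν] : 0 ≤ klDiv2 μ ν := by
  rw [klDiv2_eq]; exact EReal.coe_ennreal_nonneg _

lemma le_Fp {α : Type*} [MeasurableSpace α] (p : ℝ) (hp : p ∈ Set.Ioo (0:ℝ) 1)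
    (μ ν : Measure α) [IsProbabilityMeasure μ] [IsProbabilityMeasure ν] :
    klDiv2 μ (mix p μ ν) ≤ Fp p μ ν := by
  have := mix_prob p hp μ ν
  unfold Fp
  rw [if_neg hp.1.ne']
  refine le_add_of_nonneg_right (mul_nonneg ?_ (klDiv2_nonneg _ _))
  have := hp.2
  have := hp.1
  exact EReal.coe_nonneg.2 (div_nonneg (by linarith) (by linarith))

lemma integral_mix (p : ℝ) (hp : p ∈ Set.Ioo (0:ℝ) 1)
    (μ ν : Measure I01) [IsProbabilityMeasure μ] [IsProbabilityMeasure ν] (f : C(I01, ℝ)) :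
    ∫ x, f x ∂(mix p μ ν) = p * ∫ x, f x ∂μ + (1 - p) * ∫ x, f x ∂ν := by
  have hi : ∀ (ρ : Measure I01) [IsFiniteMeasure ρ], Integrable f ρ := fun ρ _ =>
    f.continuous.integrable_of_hasCompactSupport (HasCompactSupport.of_compactSpace _)
  unfold mix
  rw [integral_add_measure ((hi μ).smul_measure ENNReal.ofReal_ne_top)
    ((hi ν).smul_measure ENNReal.ofReal_ne_top), integral_smul_measure, integral_smul_measure,
    ENNReal.toReal_ofReal hp.1.le, ENNReal.toReal_ofReal (by linarith [hp.2])]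
  simp

lemma tendsto_mix {ι : Type*} {L : Filter ι} (p : ι → ℝ) (hp : ∀ j, p j ∈ Set.Ioo (0:ℝ) 1)
    (hp0 : Tendsto p L (𝓝 0)) (μ ν m : ι → ProbabilityMeasure I01)
    (hm : ∀ j, (m j : Measure I01) = mix (p j) (μ j) (ν j))
    (μs νs : ProbabilityMeasure I01) (hμ : Tendsto μ L (𝓝 μs)) (hν : Tendsto ν L (𝓝 νs)) :
    Tendsto m L (𝓝 νs) := by
  rw [ProbabilityMeasure.tendsto_iff_forall_integral_tendsto]
  intro f
  have h1 := (ProbabilityMeasure.tendsto_iff_forall_integral_tendsto.1 hμ) f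
  have h2 := (ProbabilityMeasure.tendsto_iff_forall_integral_tendsto.1 hν) f
  have h3 := (hp0.mul h1).add (((tendsto_const_nhds (x := (1:ℝ))).sub hp0).mul h2)
  simp only [zero_mul, sub_zero, one_mul, zero_add] at h3
  refine h3.congr fun j => ?_
  rw [hm]
  exact (integral_mix (p j) (hp j) _ _ f.toContinuousMap).symm

lemma feasible_of_tendsto (d : I01 → ℝ≥0∞) (hd : LowerSemicontinuous d) (ε : ℝ)
    (μ : ℕ → ProbabilityMeasure I01)
    (h : limsup (fun j => ∫⁻ x, d x ∂(μ j : Measure I01)) atTop ≤ ENNReal.ofReal ε)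
    (U : Ultrafilter ℕ) (hU : (U : Filter ℕ) ≤ atTop) (μs : ProbabilityMeasure I01)
    (hμ : Tendsto μ U (𝓝 μs)) : ∫⁻ x, d x ∂(μs : Measure I01) ≤ ENNReal.ofReal ε := by
  refine le_of_forall_gt_imp_ge_of_dense fun b hb => ?_
  have he : ∀ᶠ j in (U : Filter ℕ), ∫⁻ x, d x ∂(μ j : Measure I01) ≤ b :=
    hU ((eventually_lt_of_limsup_lt (lt_of_le_of_lt h hb)).mono fun _ h => h.le)
  exact (isClosed_lintegral d hd b).mem_of_tendsto hμ he

theorem stmt_5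
    -- error metrics d^K, d^N : [0,1] → [0,∞], lower semicontinuous,
    -- with d^K(1) = 0, d^N(0) = 0, and finite at some common point c
    (dK dN : I01 → ℝ≥0∞)
    (hdK_lsc : LowerSemicontinuous dK) (hdN_lsc : LowerSemicontinuous dN)
    (hdK1 : dK ⟨1, Set.right_mem_Icc.mpr zero_le_one⟩ = 0)
    (hdN0 : dN ⟨0, Set.left_mem_Icc.mpr zero_le_one⟩ = 0)
    (hc : ∃ c : I01, dK c ≠ ⊤ ∧ dN c ≠ ⊤)
    -- error levels
    (εK εN : ℝ) (hεK : 0 ≤ εK) (hεN : 0 ≤ εN)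
    -- sequence p_j ∈ (0,1), p_j → 0
    (pj : ℕ → ℝ) (hpj : ∀ j, pj j ∈ Set.Ioo (0 : ℝ) 1)
    (hpj0 : Tendsto pj atTop (nhds 0))
    -- sequences of probability measures asymptotically satisfying the error constraints
    (μKj μNj : ℕ → Measure I01)
    (hKprob : ∀ j, IsProbabilityMeasure (μKj j)) (hNprob : ∀ j, IsProbabilityMeasure (μNj j))
    (hEK : Filter.limsup (fun j => ∫⁻ x, dK x ∂(μKj j)) atTop ≤ ENNReal.ofReal εK)
    (hEN : Filter.limsup (fun j => ∫⁻ x, dN x ∂(μNj j)) atTop ≤ ENNReal.ofReal εN) :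
    ∃ μKs μNs : Measure I01,
      IsProbabilityMeasure μKs ∧ IsProbabilityMeasure μNs ∧
      (∫⁻ x, dK x ∂μKs) ≤ ENNReal.ofReal εK ∧ (∫⁻ x, dN x ∂μNs) ≤ ENNReal.ofReal εN ∧
      -- (μKs, μNs) attains the minimum of the KL divergence over the feasible region
      (∀ μK' μN' : Measure I01, IsProbabilityMeasure μK' → IsProbabilityMeasure μN' →
        (∫⁻ x, dK x ∂μK') ≤ ENNReal.ofReal εK → (∫⁻ x, dN x ∂μN') ≤ ENNReal.ofReal εN →
        klDiv2 μKs μNs ≤ klDiv2 μK' μN') ∧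
      -- the liminf lower bound
      klDiv2 μKs μNs ≤ Filter.liminf (fun j => Fp (pj j) (μKj j) (μNj j)) atTop := by
  classical
  let PM := ProbabilityMeasure I01
  let S : Set (PM × PM) := {q | ∫⁻ x, dK x ∂(q.1 : Measure I01) ≤ ENNReal.ofReal εK} ∩
    {q | ∫⁻ x, dN x ∂(q.2 : Measure I01) ≤ ENNReal.ofReal εN}
  have hSc : IsClosed S :=
    ((isClosed_lintegral dK hdK_lsc _).preimage continuous_fst).inter
      ((isClosed_lintegral dN hdN_lsc _).preimage continuous_snd)
  have hSne : S.Nonempty := by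
    refine ⟨(⟨Measure.dirac ⟨1, Set.right_mem_Icc.mpr zero_le_one⟩, inferInstance⟩,
      ⟨Measure.dirac ⟨0, Set.left_mem_Icc.mpr zero_le_one⟩, inferInstance⟩), ?_, ?_⟩
    · change ∫⁻ x, dK x ∂(Measure.dirac _) ≤ _
      rw [lintegral_dirac' _ hdK_lsc.measurable, hdK1]; exact zero_le
    · change ∫⁻ x, dN x ∂(Measure.dirac _) ≤ _
      rw [lintegral_dirac' _ hdN_lsc.measurable, hdN0]; exact zero_le
  obtain ⟨q, hqS, hqmin⟩ := LowerSemicontinuousOn.exists_isMinOn hSne hSc.isCompact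
    (lsc_klDiv2.lowerSemicontinuousOn S)
  refine ⟨q.1, q.2, inferInstance, inferInstance, hqS.1, hqS.2, ?_, ?_⟩
  · intro μK' μN' hK hN h1 h2
    exact hqmin (show ((⟨μK', hK⟩, ⟨μN', hN⟩) : PM × PM) ∈ S from ⟨h1, h2⟩)
  · by_contra hlt
    rw [not_le] at hlt
    obtain ⟨b, hb1, hb2⟩ := exists_between hlt
    have hfr : ∃ᶠ j in atTop, Fp (pj j) (μKj j) (μNj j) < b :=
      frequently_lt_of_liminf_lt (by isBoundedDefault) hb1
    let μ : ℕ → PM := fun j => ⟨μKj j, hKprob j⟩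
    let ν : ℕ → PM := fun j => ⟨μNj j, hNprob j⟩
    let m : ℕ → PM := fun j => ⟨mix (pj j) (μKj j) (μNj j), mix_prob _ (hpj j) _ _⟩
    have hne : (atTop ⊓ 𝓟 {j | Fp (pj j) (μKj j) (μNj j) < b} : Filter ℕ).NeBot :=
      frequently_mem_iff_neBot.1 hfr
    let U : Ultrafilter ℕ := Ultrafilter.of (atTop ⊓ 𝓟 {j | Fp (pj j) (μKj j) (μNj j) < b})
    have hU : (U : Filter ℕ) ≤ atTop ⊓ 𝓟 {j | Fp (pj j) (μKj j) (μNj j) < b} :=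
      Ultrafilter.of_le _
    have hUa : (U : Filter ℕ) ≤ atTop := hU.trans inf_le_left
    have hUb : ∀ᶠ j in (U : Filter ℕ), Fp (pj j) (μKj j) (μNj j) < b :=
      (hU.trans inf_le_right) (mem_principal_self _)
    have hμ : Tendsto μ U (𝓝 (U.map μ).lim) := (U.map μ).le_nhds_lim
    have hν : Tendsto ν U (𝓝 (U.map ν).lim) := (U.map ν).le_nhds_lim
    have hm := tendsto_mix pj hpj (hpj0.mono_left hUa) μ ν m (fun _ => rfl) _ _ hμ hν
    have hcl : IsClosed {q : PM × PM | klDiv2 (q.1 : Measure I01) (q.2 : Measure I01) ≤ b} :=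
      lsc_klDiv2.isClosed_preimage b
    have hle := hcl.mem_of_tendsto (hμ.prodMk_nhds hm) (hUb.mono fun j hj =>
      (le_Fp (pj j) (hpj j) (μKj j) (μNj j)).trans hj.le)
    have hS : ((U.map μ).lim, (U.map ν).lim) ∈ S :=
      ⟨feasible_of_tendsto dK hdK_lsc εK μ hEK U hUa _ hμ,
        feasible_of_tendsto dN hdN_lsc εN ν hEN U hUa _ hν⟩
    exact absurd ((hqmin hS).trans hle) (not_le.2 hb2)
end

section
/- Fix error metrics d^K, d^N satisfying the stated assumptions, error levels εK, εN > 0, and p ∈ (0,1). If the minimum R_p(εK, εN) = min{F_p(μK, μN) : (μK, μN) ∈ C_K(εK) × C_N(εN)} is finite, then there exists a minimizing pair (μK′, μN′) ∈ C_K(εK) × C_N(εN) with F_p(μK′, μN′) = R_p(εK, εN) such that μK′ and μN′ are discrete measures and the union of their supports has cardinality at most 5. -/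
/- STATEMENT 10: If for p ∈ (0,1) the minimum R_p(εK, εN) of F_p over the feasible region
   is finite, then it is attained by a pair of discrete measures whose supports
   together contain at most 5 points. -/

open MeasureTheory Filter Topology
open scoped ENNReal

/-- Feasibility for the error constraints. -/
def Feasible (dK dN : I01 → ℝ≥0∞) (εK εN : ℝ) (μK μN : Measure I01) : Prop :=
  IsProbabilityMeasure μK ∧ IsProbabilityMeasure μN ∧
    (∫⁻ x, dK x ∂μK) ≤ ENNReal.ofReal εK ∧ (∫⁻ x, dN x ∂μN) ≤ ENNReal.ofReal εN

/-- The rate function `R_p(εK, εN)`. -/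
noncomputable def Rp (dK dN : I01 → ℝ≥0∞) (εK εN : ℝ) (p : ℝ) : EReal :=
  sInf {e : EReal | ∃ μK μN : Measure I01, Feasible dK dN εK εN μK μN ∧ Fp p μK μN = e}

lemma sep_aux {V : Type*} [NormedAddCommGroup V] [NormedSpace ℝ V] [FiniteDimensional ℝ V]
    {s : Set V} (hs : Convex ℝ s) (hne : s.Nonempty) (h0 : (0 : V) ∉ s) :
    ∃ l : V →ₗ[ℝ] ℝ, l ≠ 0 ∧ ∀ y ∈ s, 0 ≤ l y := by
  by_cases hA : affineSpan ℝ s = ⊤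
  · have hi := hs.interior_nonempty_iff_affineSpan_eq_top.mpr hA
    obtain ⟨f, hf⟩ := geometric_hahn_banach_point_open hs.interior isOpen_interior
      (fun h => h0 (interior_subset h))
    obtain ⟨z, hz⟩ := hi
    refine ⟨f.toLinearMap, ?_, ?_⟩
    · intro h
      have h1 := hf z hz
      have : f z = 0 := by simpa using congrArg (fun g : V →ₗ[ℝ] ℝ => g z) h
      simp [this] at h1
    · have hcl : s ⊆ closure (interior s) := by
        rw [hs.closure_interior_eq_closure_of_nonempty_interior ⟨z, hz⟩]
        exact subset_closure
      have hc : IsClosed {y | 0 ≤ f y} := isClosed_le continuous_const f.continuous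
      have hsub : closure (interior s) ⊆ {y | 0 ≤ f y} := by
        apply closure_minimal _ hc
        intro y hy
        have := hf y hy
        simpa using this.le
      intro y hy
      exact hsub (hcl hy)
  · by_cases h0A : (0 : V) ∈ affineSpan ℝ s
    · have hD : (affineSpan ℝ s).direction ≠ ⊤ := by
        intro h
        exact hA ((AffineSubspace.direction_eq_top_iff_of_nonempty ⟨0, h0A⟩).mp h)
      obtain ⟨l, hl, hle⟩ := Submodule.exists_le_ker_of_lt_top _ (lt_top_iff_ne_top.mpr hD)
      refine ⟨l, hl, fun y hy => ?_⟩
      have : y -ᵥ (0:V) ∈ (affineSpan ℝ s).direction :=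
        AffineSubspace.vsub_mem_direction (subset_affineSpan ℝ s hy) h0A
      have := hle this
      simp at this
      exact this.ge
    · obtain ⟨f, u, hu, hf⟩ := geometric_hahn_banach_point_closed
        (affineSpan ℝ s).convex (AffineSubspace.closed_of_finiteDimensional _) h0A
      obtain ⟨z, hz⟩ := hne
      simp at hu
      refine ⟨f.toLinearMap, ?_, ?_⟩
      · intro h
        have h1 := hf z (subset_affineSpan ℝ s hz)
        have : f z = 0 := by simpa using congrArg (fun g : V →ₗ[ℝ] ℝ => g z) h
        linarith
      · intro y hy
        exact (hu.trans (hf y (subset_affineSpan ℝ s hy))).le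

lemma mem_aux {V : Type*} [NormedAddCommGroup V] [NormedSpace ℝ V] [FiniteDimensional ℝ V]
    {Ω : Type*} [MeasurableSpace Ω] (m : Measure Ω) [IsProbabilityMeasure m]
    (f : Ω → V) (hf : Integrable f m) (hz : ∫ x, f x ∂m = 0)
    {s : Set V} (hs : Convex ℝ s) (hfs : ∀ᵐ x ∂m, f x ∈ s) (n : ℕ) :
    ∀ W : Submodule ℝ V, Module.finrank ℝ W ≤ n → (∀ᵐ x ∂m, f x ∈ W) → (0 : V) ∈ s := by
  induction n with
  | zero =>
    intro W hW hfW
    obtain ⟨x, hx1, hx2⟩ := (hfs.and hfW).exists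
    have : W = ⊥ := Submodule.finrank_eq_zero.mp (Nat.le_zero.mp hW)
    rw [this, Submodule.mem_bot] at hx2
    rwa [hx2] at hx1
  | succ n ih =>
    intro W hW hfW
    by_contra h0
    obtain ⟨x, hx1, hx2⟩ := (hfs.and hfW).exists
    have hc : Convex ℝ (W.subtype ⁻¹' s) := hs.linear_preimage W.subtype
    obtain ⟨l, hl, hpos⟩ := sep_aux hc ⟨⟨f x, hx2⟩, hx1⟩ (by simpa using h0)
    obtain ⟨g, hg⟩ := l.exists_extend
    have hgl : ∀ w : W, g w = l w := fun w => by rw [← hg]; rfl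
    let g' : V →L[ℝ] ℝ := LinearMap.toContinuousLinearMap g
    have hint : Integrable (fun x => g' (f x)) m := g'.integrable_comp hf
    have hi0 : ∫ x, g' (f x) ∂m = 0 := by
      rw [g'.integral_comp_comm hf, hz, map_zero]
    have hnn : 0 ≤ᵐ[m] fun x => g' (f x) := by
      filter_upwards [hfs, hfW] with x h1 h2
      have := hpos ⟨f x, h2⟩ h1
      rw [← hgl] at this
      exact this
    have hae := (integral_eq_zero_iff_of_nonneg_ae hnn hint).mp hi0
    refine h0 (ih (W ⊓ LinearMap.ker g) ?_ ?_)
    · have hlt : W ⊓ LinearMap.ker g < W := by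
        refine lt_of_le_of_ne inf_le_left fun h => hl ?_
        ext w
        have : (w : V) ∈ W ⊓ LinearMap.ker g := by rw [h]; exact w.2
        rw [← hgl]
        exact this.2
      have := Submodule.finrank_lt_finrank_of_lt hlt
      omega
    · filter_upwards [hae, hfW] with x h1 h2
      exact ⟨h2, h1⟩

lemma integral_mem_convex {V : Type*} [NormedAddCommGroup V] [NormedSpace ℝ V]
    [FiniteDimensional ℝ V]
    {Ω : Type*} [MeasurableSpace Ω] (m : Measure Ω) [IsProbabilityMeasure m]
    (f : Ω → V) (hf : Integrable f m)
    {s : Set V} (hs : Convex ℝ s) (hfs : ∀ᵐ x ∂m, f x ∈ s) : ∫ x, f x ∂m ∈ s := by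
  have := mem_aux m (fun x => f x - ∫ x, f x ∂m) (hf.sub (integrable_const _))
    (by rw [integral_sub hf (integrable_const _)]; simp)
    (s := (fun y => y + ∫ x, f x ∂m) ⁻¹' s)
    (hs.translate_preimage_left _) (by simpa using hfs) _ ⊤ le_rfl (by simp)
  simpa using this

lemma carath {Ω : Type*} [MeasurableSpace Ω] (m : Measure Ω) [IsProbabilityMeasure m]
    (f : Fin 4 → Ω → ℝ) (hf : ∀ j, Integrable (f j) m) (P : Ω → Prop) (hP : ∀ᵐ x ∂m, P x) :
    ∃ (ι : Type) (_ : Fintype ι) (x : ι → Ω) (w : ι → ℝ), Fintype.card ι ≤ 5 ∧ (∀ i, 0 < w i) ∧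
      ∑ i, w i = 1 ∧ (∀ i, P (x i)) ∧ ∀ j, ∑ i, w i * f j (x i) = ∫ x, f j x ∂m := by
  let F : Ω → Fin 4 → ℝ := fun x j => f j x
  have hF : Integrable F m := Integrable.of_eval hf
  have hmem : ∫ x, F x ∂m ∈ convexHull ℝ (F '' {x | P x}) := by
    apply integral_mem_convex m F hF (convex_convexHull _ _)
    filter_upwards [hP] with x hx
    exact subset_convexHull _ _ ⟨x, hx, rfl⟩
  obtain ⟨ι, hι, z, w, hz, haff, hw, hw1, hsum⟩ := eq_pos_convex_span_of_mem_convexHull hmem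
  have hz' : ∀ i, ∃ x, P x ∧ F x = z i := fun i => hz ⟨i, rfl⟩
  choose x hx hxz using hz'
  refine ⟨ι, hι, x, w, ?_, hw, hw1, hx, fun j => ?_⟩
  · have := haff.card_le_finrank_succ
    have h2 := Submodule.finrank_le (vectorSpan ℝ (Set.range z))
    simp at h2
    omega
  · rw [← eval_integral (f := F) hf j, ← hsum]
    simp [← hxz, F]

lemma mulLogb_bdd (C : ℝ) : ∃ M, ∀ t ∈ Set.Icc (0 : ℝ) C, ‖t * Real.logb 2 t‖ ≤ M := by
  have hc : Continuous fun t : ℝ => t * Real.logb 2 t := by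
    have : (fun t : ℝ => t * Real.logb 2 t) = fun t => (t * Real.log t) / Real.log 2 := by
      funext t; simp [Real.logb, mul_div_assoc]
    rw [this]
    exact Real.continuous_mul_log.div_const _
  exact isCompact_Icc.exists_bound_of_continuousOn hc.continuousOn

lemma mulLogb_integrable {Ω : Type*} [MeasurableSpace Ω] (m : Measure Ω) [IsProbabilityMeasure m]
    (a : Ω → ℝ≥0∞) (ha : Measurable a) (C : ℝ) (hC : ∀ᵐ x ∂m, (a x).toReal ≤ C) :
    Integrable (fun x => (a x).toReal * Real.logb 2 (a x).toReal) m := by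
  obtain ⟨M, hM⟩ := mulLogb_bdd C
  refine Integrable.of_bound (C := M) ?_ ?_
  · apply Measurable.aestronglyMeasurable
    have := ha.ennreal_toReal
    unfold Real.logb
    exact this.mul ((Real.measurable_log.comp this).div_const _)
  · filter_upwards [hC] with x hx
    exact hM _ ⟨ENNReal.toReal_nonneg, hx⟩

lemma kl_wd {Ω : Type*} [MeasurableSpace Ω] (m : Measure Ω) [IsProbabilityMeasure m]
    (a : Ω → ℝ≥0∞) (ha : Measurable a) (hfin : ∀ᵐ x ∂m, a x < ⊤) (C : ℝ)
    (hC : ∀ᵐ x ∂m, (a x).toReal ≤ C) :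
    klDiv2 (m.withDensity a) m =
      ((∫ x, (a x).toReal * Real.logb 2 (a x).toReal ∂m : ℝ) : EReal) := by
  have hac : m.withDensity a ≪ m := withDensity_absolutelyContinuous m a
  have hrn := Measure.rnDeriv_withDensity m ha
  have hrn' : (fun x => Real.logb 2 (((m.withDensity a).rnDeriv m x).toReal))
      =ᵐ[m.withDensity a] fun x => Real.logb 2 (a x).toReal := by
    filter_upwards [hac.ae_le hrn] with x hx
    rw [hx]
  have hint : Integrable (fun x => Real.logb 2 (a x).toReal) (m.withDensity a) := by
    rw [integrable_withDensity_iff_integrable_smul' ha hfin]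
    simpa using mulLogb_integrable m a ha C hC
  unfold klDiv2
  rw [if_pos ⟨hac, hint.congr hrn'.symm⟩, integral_congr_ae hrn',
    integral_withDensity_eq_integral_toReal_smul ha hfin]
  simp

lemma ab_bound {p : ℝ} (hp : p ∈ Set.Ioo (0 : ℝ) 1) {a b : ℝ≥0∞}
    (h : ENNReal.ofReal p * a + ENNReal.ofReal (1 - p) * b = 1) :
    a < ⊤ ∧ b < ⊤ ∧ a.toReal ≤ 1 / p ∧ b.toReal ≤ 1 / (1 - p) := by
  obtain ⟨h0, h1⟩ := hp
  have h1' : 0 < 1 - p := by linarith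
  have hp0 : ENNReal.ofReal p ≠ 0 := by simpa using h0
  have hq0 : ENNReal.ofReal (1 - p) ≠ 0 := by simpa using h1
  have ha : a ≠ ⊤ := by
    rintro rfl
    rw [ENNReal.mul_top hp0, top_add] at h
    exact ENNReal.top_ne_one h
  have hb : b ≠ ⊤ := by
    rintro rfl
    rw [ENNReal.mul_top hq0, add_top] at h
    exact ENNReal.top_ne_one h
  have hr := congrArg ENNReal.toReal h
  rw [ENNReal.toReal_add (ENNReal.mul_ne_top ENNReal.ofReal_ne_top ha)
    (ENNReal.mul_ne_top ENNReal.ofReal_ne_top hb), ENNReal.toReal_mul, ENNReal.toReal_mul,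
    ENNReal.toReal_ofReal h0.le, ENNReal.toReal_ofReal h1'.le, ENNReal.toReal_one] at hr
  have hA := ENNReal.toReal_nonneg (a := a)
  have hB := ENNReal.toReal_nonneg (a := b)
  refine ⟨ha.lt_top, hb.lt_top, ?_, ?_⟩
  · rw [le_div_iff₀ h0]; nlinarith
  · rw [le_div_iff₀ h1']; nlinarith

lemma mix_wd {Ω : Type*} [MeasurableSpace Ω] (m : Measure Ω)
    (p : ℝ) (a b : Ω → ℝ≥0∞) (ha : Measurable a) (hb : Measurable b) :
    mix p (m.withDensity a) (m.withDensity b) =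
      m.withDensity (fun x => ENNReal.ofReal p * a x + ENNReal.ofReal (1 - p) * b x) := by
  unfold mix
  rw [← withDensity_smul _ ha, ← withDensity_smul _ hb,
    ← withDensity_add_left (ha.const_smul _)]
  rfl

noncomputable def phi {Ω : Type*} (p : ℝ) (a b : Ω → ℝ≥0∞) (x : Ω) : ℝ :=
  (a x).toReal * Real.logb 2 (a x).toReal +
    (1 - p) / p * ((b x).toReal * Real.logb 2 (b x).toReal)

lemma Fp_wd {Ω : Type*} [MeasurableSpace Ω] (m : Measure Ω) [IsProbabilityMeasure m]
    {p : ℝ} (hp : p ∈ Set.Ioo (0 : ℝ) 1)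
    (a b : Ω → ℝ≥0∞) (ha : Measurable a) (hb : Measurable b)
    (hab : ∀ᵐ x ∂m, ENNReal.ofReal p * a x + ENNReal.ofReal (1 - p) * b x = 1) :
    Integrable (phi p a b) m ∧
    Fp p (m.withDensity a) (m.withDensity b) = ((∫ x, phi p a b x ∂m : ℝ) : EReal) := by
  have hm : mix p (m.withDensity a) (m.withDensity b) = m := by
    rw [mix_wd m p a b ha hb, withDensity_congr_ae (g := 1) hab, withDensity_one]
  have hA : ∀ᵐ x ∂m, (a x).toReal ≤ 1 / p := hab.mono fun x h => (ab_bound hp h).2.2.1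
  have hB : ∀ᵐ x ∂m, (b x).toReal ≤ 1 / (1 - p) := hab.mono fun x h => (ab_bound hp h).2.2.2
  have iA := mulLogb_integrable m a ha _ hA
  have iB := (mulLogb_integrable m b hb _ hB).const_mul ((1 - p) / p)
  refine ⟨iA.add iB, ?_⟩
  unfold Fp
  rw [if_neg hp.1.ne', hm, kl_wd m a ha (hab.mono fun x h => (ab_bound hp h).1) _ hA,
    kl_wd m b hb (hab.mono fun x h => (ab_bound hp h).2.1) _ hB]
  unfold phi
  rw [integral_add iA iB, integral_const_mul]
  push_cast
  rfl

noncomputable def dm {Ω ι : Type*} [MeasurableSpace Ω] [Fintype ι] (x : ι → Ω) (w : ι → ℝ) :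
    Measure Ω := ∑ i, ENNReal.ofReal (w i) • Measure.dirac (x i)

lemma dm_lintegral {Ω ι : Type*} [MeasurableSpace Ω] [Fintype ι] (x : ι → Ω) (w : ι → ℝ)
    (g : Ω → ℝ≥0∞) (hg : Measurable g) :
    ∫⁻ y, g y ∂(dm x w) = ∑ i, ENNReal.ofReal (w i) * g (x i) := by
  unfold dm
  rw [lintegral_finsetSum_measure]
  simp [lintegral_dirac' _ hg]

lemma dm_integral {Ω ι : Type*} [MeasurableSpace Ω] [MeasurableSingletonClass Ω] [Fintype ι]
    (x : ι → Ω) (w : ι → ℝ) (hw : ∀ i, 0 < w i) (g : Ω → ℝ) :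
    ∫ y, g y ∂(dm x w) = ∑ i, w i * g (x i) := by
  unfold dm
  rw [integral_finsetSum_measure]
  · simp [integral_dirac, (hw _).le]
  · intro i _
    exact (integrable_dirac (by simp)).smul_measure ENNReal.ofReal_ne_top

lemma dm_transfer {Ω ι : Type*} [MeasurableSpace Ω] [Fintype ι] (m : Measure Ω)
    (x : ι → Ω) (w : ι → ℝ) (hw : ∀ i, 0 < w i) (g : Ω → ℝ≥0∞) (hg : Measurable g)
    (hx : ∀ i, g (x i) < ⊤) (hfin : ∫⁻ y, g y ∂m ≠ ⊤)
    (h : ∑ i, w i * (g (x i)).toReal = ∫ y, (g y).toReal ∂m) :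
    ∫⁻ y, g y ∂(dm x w) = ∫⁻ y, g y ∂m := by
  rw [dm_lintegral x w g hg]
  rw [integral_toReal hg.aemeasurable (ae_lt_top hg hfin)] at h
  rw [← ENNReal.ofReal_toReal hfin, ← h, ENNReal.ofReal_sum_of_nonneg
    (fun i _ => mul_nonneg (hw i).le ENNReal.toReal_nonneg)]
  refine Finset.sum_congr rfl fun i _ => ?_
  rw [ENNReal.ofReal_mul (hw i).le, ENNReal.ofReal_toReal (hx i).ne]

lemma prob_b {Ω : Type*} [MeasurableSpace Ω] (m : Measure Ω) [IsProbabilityMeasure m]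
    {p : ℝ} (hp : p ∈ Set.Ioo (0 : ℝ) 1)
    (a b : Ω → ℝ≥0∞) (ha : Measurable a) (hb : Measurable b)
    (hab : ∀ᵐ x ∂m, ENNReal.ofReal p * a x + ENNReal.ofReal (1 - p) * b x = 1)
    (h1 : ∫⁻ x, a x ∂m = 1) : ∫⁻ x, b x ∂m = 1 := by
  have h := lintegral_congr_ae hab
  rw [lintegral_add_left (by fun_prop), lintegral_const_mul _ ha, lintegral_const_mul _ hb, h1]
    at h
  have hfin : ∫⁻ x, b x ∂m < ⊤ := (ab_bound hp (a := 1) (by simpa using h)).2.1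
  have hr := congrArg ENNReal.toReal h
  have h1' : 0 < 1 - p := by linarith [hp.2]
  simp only [lintegral_const, measure_univ, mul_one] at hr
  rw [ENNReal.toReal_add ENNReal.ofReal_ne_top
    (ENNReal.mul_ne_top ENNReal.ofReal_ne_top hfin.ne), ENNReal.toReal_mul,
    ENNReal.toReal_ofReal hp.1.le, ENNReal.toReal_ofReal h1'.le, ENNReal.toReal_one] at hr
  rw [← ENNReal.ofReal_toReal hfin.ne]
  have : (∫⁻ x, b x ∂m).toReal = 1 := by
    have : (1 - p) * ((∫⁻ x, b x ∂m).toReal - 1) = 0 := by linarith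
    rcases mul_eq_zero.mp this with h | h <;> linarith
  rw [this]; simp

theorem stmt_10
    (dK dN : I01 → ℝ≥0∞)
    (hdK_lsc : LowerSemicontinuous dK) (hdN_lsc : LowerSemicontinuous dN)
    (hdK1 : dK ⟨1, Set.right_mem_Icc.mpr zero_le_one⟩ = 0)
    (hdN0 : dN ⟨0, Set.left_mem_Icc.mpr zero_le_one⟩ = 0)
    (hc : ∃ c : I01, dK c ≠ ⊤ ∧ dN c ≠ ⊤)
    (εK εN : ℝ) (hεK : 0 < εK) (hεN : 0 < εN)
    (p : ℝ) (hp : p ∈ Set.Ioo (0 : ℝ) 1)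
    -- the minimum R_p(εK, εN) is attained and finite
    (hattained : ∃ μK μN : Measure I01,
      Feasible dK dN εK εN μK μN ∧ Fp p μK μN = Rp dK dN εK εN p)
    (hfin : Rp dK dN εK εN p ≠ ⊤) :
    -- there is a minimizing pair of discrete measures with combined support ≤ 5 points
    ∃ μK' μN' : Measure I01,
      Feasible dK dN εK εN μK' μN' ∧
      Fp p μK' μN' = Rp dK dN εK εN p ∧
      ∃ s : Finset I01, s.card ≤ 5 ∧ μK' ((↑s : Set I01)ᶜ) = 0 ∧ μN' ((↑s : Set I01)ᶜ) = 0 := by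
  obtain ⟨μK, μN, ⟨pK, pN, hK, hN⟩, hF⟩ := hattained
  have hp' := hp
  obtain ⟨hp0, hp1⟩ := hp'
  have hq0 : 0 < 1 - p := by linarith
  set m := mix p μK μN with hm
  have hsum : ENNReal.ofReal p + ENNReal.ofReal (1 - p) = 1 := by
    rw [← ENNReal.ofReal_add hp0.le hq0.le]; simp
  haveI : IsProbabilityMeasure m := ⟨by rw [hm]; simp [mix, hsum]⟩
  have acK : μK ≪ m := by
    have h1 : μK ≪ ENNReal.ofReal p • μK :=
      Measure.absolutelyContinuous_smul (by simpa using hp0)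
    exact h1.trans (Measure.le_add_right le_rfl).absolutelyContinuous
  have acN : μN ≪ m := by
    have h1 : μN ≪ ENNReal.ofReal (1 - p) • μN :=
      Measure.absolutelyContinuous_smul (by simpa using hp1)
    exact h1.trans (Measure.le_add_left le_rfl).absolutelyContinuous
  set a := μK.rnDeriv m with ha_def
  set b := μN.rnDeriv m with hb_def
  have ha : Measurable a := Measure.measurable_rnDeriv _ _
  have hb : Measurable b := Measure.measurable_rnDeriv _ _
  have eK : m.withDensity a = μK := Measure.withDensity_rnDeriv_eq _ _ acK
  have eN : m.withDensity b = μN := Measure.withDensity_rnDeriv_eq _ _ acN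
  have hab : ∀ᵐ x ∂m, ENNReal.ofReal p * a x + ENNReal.ofReal (1 - p) * b x = 1 := by
    have h := mix_wd m p a b ha hb
    rw [eK, eN, ← hm] at h
    have h2 : m.withDensity (1 : I01 → ℝ≥0∞) =
        m.withDensity (fun x => ENNReal.ofReal p * a x + ENNReal.ofReal (1 - p) * b x) := by
      rw [← h, withDensity_one]
    have h3 := (withDensity_eq_iff (by fun_prop) (by fun_prop) (by simp)).mp h2
    filter_upwards [h3] with x hx
    exact hx.symm
  have mK : Measurable dK := hdK_lsc.measurable
  have mN : Measurable dN := hdN_lsc.measurable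
  have IK : ∫⁻ x, (a * dK) x ∂m ≤ ENNReal.ofReal εK := by
    rw [← lintegral_withDensity_eq_lintegral_mul m ha mK, eK]; exact hK
  have IN : ∫⁻ x, (b * dN) x ∂m ≤ ENNReal.ofReal εN := by
    rw [← lintegral_withDensity_eq_lintegral_mul m hb mN, eN]; exact hN
  have IKt := (IK.trans_lt ENNReal.ofReal_lt_top).ne
  have INt := (IN.trans_lt ENNReal.ofReal_lt_top).ne
  have Ia : ∫⁻ x, a x ∂m = 1 := by
    rw [← setLIntegral_univ, ← withDensity_apply _ MeasurableSet.univ, eK]; simp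
  have maK : Measurable (a * dK) := ha.mul mK
  have mbN : Measurable (b * dN) := hb.mul mN
  obtain ⟨hphi, hFm⟩ := Fp_wd m hp a b ha hb hab
  rw [eK, eN] at hFm
  obtain ⟨ι, _, x, w, hcard, hw, hw1, hx, hj⟩ := carath m
    ![fun x => (a x).toReal, fun x => ((a * dK) x).toReal, fun x => ((b * dN) x).toReal,
      phi p a b]
    (by
      intro j
      fin_cases j
      · exact integrable_toReal_of_lintegral_ne_top ha.aemeasurable (by rw [Ia]; simp)
      · exact integrable_toReal_of_lintegral_ne_top maK.aemeasurable IKt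
      · exact integrable_toReal_of_lintegral_ne_top mbN.aemeasurable INt
      · exact hphi)
    (fun x => ENNReal.ofReal p * a x + ENNReal.ofReal (1 - p) * b x = 1 ∧
      (a * dK) x < ⊤ ∧ (b * dN) x < ⊤)
    (by filter_upwards [hab, ae_lt_top maK IKt, ae_lt_top mbN INt] with x h1 h2 h3
        exact ⟨h1, h2, h3⟩)
  have j0 := hj 0
  have j1 := hj 1
  have j2 := hj 2
  have j3 := hj 3
  simp only [Matrix.cons_val] at j0 j1 j2 j3
  have T0 := dm_transfer m x w hw a ha (fun i => (ab_bound hp (hx i).1).1) (by rw [Ia]; simp) j0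
  have T1 := dm_transfer m x w hw (a * dK) maK (fun i => (hx i).2.1) IKt j1
  have T2 := dm_transfer m x w hw (b * dN) mbN (fun i => (hx i).2.2) INt j2
  haveI : IsProbabilityMeasure (dm x w) := ⟨by
    rw [← lintegral_one, dm_lintegral x w _ measurable_const]
    simp only [mul_one]
    rw [← ENNReal.ofReal_sum_of_nonneg (fun i _ => (hw i).le), hw1]; simp⟩
  classical
  let s : Finset I01 := Finset.univ.image x
  have hs0 : dm x w ((↑s : Set I01)ᶜ) = 0 := by
    unfold dm
    simp [s]
  have hae : ∀ᵐ y ∂(dm x w), y ∈ s := by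
    rw [ae_iff]; exact hs0
  have hab' : ∀ᵐ y ∂(dm x w), ENNReal.ofReal p * a y + ENNReal.ofReal (1 - p) * b y = 1 := by
    filter_upwards [hae] with y hy
    obtain ⟨i, -, rfl⟩ := Finset.mem_image.mp hy
    exact (hx i).1
  rw [Ia] at T0
  have Tb := prob_b (dm x w) hp a b ha hb hab' T0
  refine ⟨(dm x w).withDensity a, (dm x w).withDensity b, ⟨⟨?_⟩, ⟨?_⟩, ?_, ?_⟩, ?_, s, ?_, ?_, ?_⟩
  · rw [withDensity_apply _ MeasurableSet.univ, setLIntegral_univ, T0]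
  · rw [withDensity_apply _ MeasurableSet.univ, setLIntegral_univ, Tb]
  · rw [lintegral_withDensity_eq_lintegral_mul _ ha mK, T1]; exact IK
  · rw [lintegral_withDensity_eq_lintegral_mul _ hb mN, T2]; exact IN
  · rw [(Fp_wd (dm x w) hp a b ha hb hab').2, dm_integral x w hw, j3, ← hFm, hF]
  · exact Finset.card_image_le.trans hcard
  · exact withDensity_absolutelyContinuous _ _ hs0
  · exact withDensity_absolutelyContinuous _ _ hs0
end

section
/- Let u > n ≥ 1 and p = n/u. Let K be a uniformly random n-element subset of [u] = {1, …, u}, set X_i = 1{i ∈ K} for i ∈ [u], and let X̂ = (X̂_1, …, X̂_u) be any random vector of [0,1]-valued random variables jointly distributed with X = (X_1, …, X_u). Let I be uniformly distributed on [u], independent of (X, X̂). Then the mutual information satisfies I(X; X̂) ≥ u·I(X_I; X̂_I) − (1/2)·log₂(8n), where I(X_I; X̂_I) is computed under the joint law of (X_I, X̂_I) induced by the random index I. -/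
/- STATEMENT 19: Single-letterization lower bound.  Let K be a uniformly random
   n-element subset of [u] (encoded as X : Ω → (Fin u → Bool), the indicator vector,
   uniform over vectors with exactly n `true`s), let X̂ be any [0,1]^u-valued random
   vector jointly distributed with X, and let I be a uniform index independent of
   (X, X̂).  Then I(X; X̂) ≥ u·I(X_I; X̂_I) − (1/2)·log₂(8n). -/

open MeasureTheory Filter Topology
open scoped ENNReal

lemma stirl_b_mono (m : ℕ) (hm : 1 ≤ m) (n : ℕ) :
    (m.factorial : ℝ) * Real.exp m / (m : ℝ) ^ m ≤
      ((m + n).factorial : ℝ) * Real.exp ((m + n : ℕ) : ℝ) / ((m + n : ℕ) : ℝ) ^ (m + n) := by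
  induction n with
  | zero => simp
  | succ k ih =>
    refine ih.trans ?_
    have hk : 1 ≤ m + k := by omega
    rw [← Nat.add_assoc]
    generalize m + k = j at hk
    have hj : (0 : ℝ) < j := by exact_mod_cast hk
    rw [div_le_div_iff₀ (by positivity) (by positivity), Nat.factorial_succ]
    push_cast
    rw [Real.exp_add, pow_succ]
    have h1 : ((j : ℝ) + 1) ^ j ≤ Real.exp 1 * (j : ℝ) ^ j := by
      have h2 : (1 : ℝ) / j + 1 ≤ Real.exp (1 / j) := Real.add_one_le_exp _
      have h3 : ((1 : ℝ) / j + 1) ^ j ≤ Real.exp (1 / j) ^ j :=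
        pow_le_pow_left₀ (by positivity) h2 j
      rw [← Real.exp_nat_mul, mul_one_div_cancel hj.ne'] at h3
      calc ((j : ℝ) + 1) ^ j = ((1 : ℝ) / j + 1) ^ j * (j : ℝ) ^ j := by
            rw [← mul_pow]; congr 1; field_simp; ring
        _ ≤ _ := by gcongr
    have : 0 ≤ (j.factorial : ℝ) * Real.exp j * ((j : ℝ) + 1) := by positivity
    nlinarith [mul_le_mul_of_nonneg_left h1 this]

lemma stirl_b_le (n : ℕ) (hn : 1 ≤ n) :
    (n.factorial : ℝ) * Real.exp n / (n : ℝ) ^ n ≤ Real.sqrt (8 * n) := by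
  have hn0 : (0 : ℝ) < n := by exact_mod_cast hn
  have h1 : Stirling.stirlingSeq n ≤ 2 := by
    obtain ⟨k, rfl⟩ : ∃ k, n = k + 1 := ⟨n - 1, by omega⟩
    have h := Stirling.stirlingSeq'_antitone (Nat.zero_le k)
    simp only [Function.comp, Nat.succ_eq_add_one, zero_add, Stirling.stirlingSeq_one] at h
    refine h.trans ?_
    rw [div_le_iff₀ (by positivity)]
    have h2 : (1.41 : ℝ) ≤ Real.sqrt 2 := Real.le_sqrt_of_sq_le (by norm_num)
    have := Real.exp_one_lt_d9
    linarith
  unfold Stirling.stirlingSeq at h1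
  rw [div_le_iff₀ (by positivity)] at h1
  have h8 : Real.sqrt (8 * n) = 2 * Real.sqrt (2 * n) := by
    rw [show (8 * n : ℝ) = 2 ^ 2 * (2 * n) by ring, Real.sqrt_mul (by norm_num),
      Real.sqrt_sq (by norm_num)]
  rw [h8, div_le_iff₀ (by positivity)]
  have he : Real.exp (n : ℝ) = Real.exp 1 ^ n := by rw [← Real.exp_nat_mul, mul_one]
  rw [he]
  rw [div_pow] at h1
  calc (n.factorial : ℝ) * Real.exp 1 ^ n
      ≤ (2 * (Real.sqrt (2 * n) * ((n : ℝ) ^ n / Real.exp 1 ^ n))) * Real.exp 1 ^ n := by gcongr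
    _ = _ := by field_simp

lemma binom_lower (n m : ℕ) (hn : 1 ≤ n) (hm : 1 ≤ m) :
    (((n + m).choose n : ℕ) : ℝ)⁻¹ ≤ Real.sqrt (8 * n) *
      (((n : ℝ) / (n + m : ℕ)) ^ n * ((m : ℝ) / (n + m : ℕ)) ^ m) := by
  have hn0 : (0 : ℝ) < n := by exact_mod_cast hn
  have hm0 : (0 : ℝ) < m := by exact_mod_cast hm
  have h1 := stirl_b_mono m hm n
  have h2 := stirl_b_le n hn
  rw [Nat.add_comm m n] at h1
  have hc : (((n + m).choose n : ℕ) : ℝ) * n.factorial * m.factorial = (n + m).factorial := by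
    exact_mod_cast (by simpa using Nat.choose_mul_factorial_mul_factorial (Nat.le_add_right n m))
  have hcp : (0 : ℝ) < ((n + m).choose n : ℕ) := by
    exact_mod_cast Nat.choose_pos (Nat.le_add_right n m)
  have hu0 : (0 : ℝ) < ((n + m : ℕ) : ℝ) := by positivity
  have h3 := mul_le_mul h2 h1 (by positivity) (by positivity)
  rw [← hc] at h3
  rw [inv_le_iff_one_le_mul₀ hcp]
  have hexp : Real.exp ((n + m : ℕ) : ℝ) = Real.exp n * Real.exp m := by
    push_cast; rw [Real.exp_add]
  rw [hexp] at h3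
  have key : (n.factorial : ℝ) * Real.exp n / (n : ℝ) ^ n *
      ((m.factorial : ℝ) * Real.exp m / (m : ℝ) ^ m) *
      ((n : ℝ) ^ n * (m : ℝ) ^ m / ((n.factorial : ℝ) * m.factorial * Real.exp n * Real.exp m)) = 1 := by
    field_simp
  rw [← key]
  refine (mul_le_mul_of_nonneg_right h3 (by positivity)).trans (le_of_eq ?_)
  rw [div_pow, div_pow, pow_add]
  field_simp

section
variable {α : Type*} [MeasurableSpace α]

lemma lint_div_le (J π : Measure α) [IsFiniteMeasure J] [IsFiniteMeasure π] (hac : J ≪ π)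
    (g : α → ℝ≥0∞) (hg : Measurable g) :
    ∫⁻ x, g x * (J.rnDeriv π x)⁻¹ ∂J ≤ ∫⁻ x, g x ∂π := by
  rw [← lintegral_rnDeriv_mul hac (by fun_prop)]
  refine lintegral_mono fun x => ?_
  rw [mul_left_comm]
  exact mul_le_of_le_one_right' (ENNReal.mul_inv_le_one _)

lemma gibbs (J π : Measure α) [IsProbabilityMeasure J] [IsFiniteMeasure π] (hac : J ≪ π)
    (hJint : Integrable (fun x => Real.log (J.rnDeriv π x).toReal) J)
    (g : α → ℝ≥0∞) (hg : Measurable g) (hpos : ∀ᵐ x ∂J, 0 < g x ∧ g x < ∞)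
    (hgi : Integrable (fun x => Real.log (g x).toReal) J)
    (C : ℝ) (hC : 0 < C) (hgC : ∫⁻ x, g x ∂π ≤ ENNReal.ofReal C) :
    ∫ x, Real.log (g x).toReal ∂J - Real.log C ≤
      ∫ x, Real.log (J.rnDeriv π x).toReal ∂J := by
  set q : α → ℝ≥0∞ := fun x => g x * (J.rnDeriv π x)⁻¹ with hq
  have hqm : Measurable q := by fun_prop
  have hql : ∫⁻ x, q x ∂J ≤ ENNReal.ofReal C := (lint_div_le J π hac g hg).trans hgC
  have hqi : Integrable (fun x => (q x).toReal) J :=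
    integrable_toReal_of_lintegral_ne_top hqm.aemeasurable (hql.trans_lt ENNReal.ofReal_lt_top).ne
  have hqv : ∫ x, (q x).toReal ∂J ≤ C := by
    rw [integral_toReal hqm.aemeasurable
      (ae_lt_top hqm (hql.trans_lt ENNReal.ofReal_lt_top).ne)]
    exact ENNReal.toReal_le_of_le_ofReal hC.le hql
  have hpt : ∀ᵐ x ∂J, Real.log (g x).toReal - Real.log (J.rnDeriv π x).toReal - Real.log C
      ≤ (q x).toReal * C⁻¹ - 1 := by
    filter_upwards [hpos, Measure.rnDeriv_pos hac, hac.ae_le (Measure.rnDeriv_lt_top J π)]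
      with x h1 h2 h3
    have a1 : 0 < (g x).toReal := ENNReal.toReal_pos h1.1.ne' h1.2.ne
    have a2 : 0 < (J.rnDeriv π x).toReal := ENNReal.toReal_pos h2.ne' h3.ne
    have : (q x).toReal = (g x).toReal / (J.rnDeriv π x).toReal := by
      simp [hq, ENNReal.toReal_mul, ENNReal.toReal_inv, div_eq_mul_inv]
    rw [this, ← Real.log_div a1.ne' a2.ne', ← Real.log_div (by positivity) hC.ne',
      ← div_eq_mul_inv]
    exact Real.log_le_sub_one_of_pos (by positivity)
  have h := integral_mono_ae ((hgi.sub hJint).sub (integrable_const _))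
    ((hqi.mul_const C⁻¹).sub (integrable_const 1)) hpt
  simp only [Pi.sub_apply] at h
  have hsub : Integrable (fun x => Real.log (g x).toReal - Real.log (J.rnDeriv π x).toReal) J :=
    hgi.sub hJint
  rw [integral_sub hsub (integrable_const _), integral_sub (hqi.mul_const _)
    (integrable_const _)] at h
  rw [integral_sub hgi hJint, integral_mul_const] at h
  simp only [integral_const, probReal_univ, one_smul] at h
  have : (∫ x, (q x).toReal ∂J) * C⁻¹ ≤ 1 := by
    rw [← div_eq_mul_inv, div_le_one hC]; exact hqv
  linarith

lemma log_int (J π : Measure α) [IsProbabilityMeasure J] [IsFiniteMeasure π] (hac : J ≪ π)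
    (C : ℝ≥0∞) (hC : C ≠ ∞) (hb : ∀ᵐ x ∂J, J.rnDeriv π x ≤ C) :
    Integrable (fun x => Real.log (J.rnDeriv π x).toReal) J := by
  have hql := lint_div_le J π hac 1 (by fun_prop)
  simp only [Pi.one_apply, one_mul, lintegral_const] at hql
  have hqi : Integrable (fun x => ((J.rnDeriv π x)⁻¹).toReal) J :=
    integrable_toReal_of_lintegral_ne_top (by fun_prop)
      (hql.trans_lt (measure_lt_top _ _)).ne
  refine (hqi.add (integrable_const C.toReal)).mono'
    (Measurable.log (by fun_prop)).aestronglyMeasurable ?_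
  filter_upwards [hb, Measure.rnDeriv_pos hac] with x h1 h2
  have a2 : 0 < (J.rnDeriv π x).toReal :=
    ENNReal.toReal_pos h2.ne' (h1.trans_lt hC.lt_top).ne
  have a3 : (J.rnDeriv π x).toReal ≤ C.toReal := ENNReal.toReal_mono hC h1
  simp only [Pi.add_apply, ENNReal.toReal_inv, Real.norm_eq_abs]
  have b1 := Real.log_le_sub_one_of_pos a2
  have b2 := Real.log_le_sub_one_of_pos (inv_pos.2 a2)
  rw [Real.log_inv] at b2
  have := inv_pos.2 a2
  rw [abs_le]; constructor <;> linarith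

/-- Joint laws with a Boolean first coordinate. -/
lemma ac_bool {β : Type*} [MeasurableSpace β] (ν : Measure (Bool × β)) [IsProbabilityMeasure ν]
    (h0 : ∀ b, ν.map Prod.fst {b} ≠ 0) :
    ν ≪ (ν.map Prod.fst).prod (ν.map Prod.snd) := by
  have : IsProbabilityMeasure (ν.map Prod.fst) := Measure.isProbabilityMeasure_map (by fun_prop)
  have : IsProbabilityMeasure (ν.map Prod.snd) := Measure.isProbabilityMeasure_map (by fun_prop)
  refine Measure.AbsolutelyContinuous.mk fun A hA h => ?_
  rw [Measure.prod_apply hA, lintegral_fintype, Finset.sum_eq_zero_iff] at h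
  have h' : ∀ b, ν.map Prod.snd (Prod.mk b ⁻¹' A) = 0 := fun b => by
    rcases mul_eq_zero.1 (h b (Finset.mem_univ b)) with h | h
    · exact h
    · exact absurd h (h0 b)
  refine measure_mono_null (t := ⋃ b : Bool, Prod.snd ⁻¹' (Prod.mk b ⁻¹' A)) ?_ ?_
  · rintro ⟨b, y⟩ hb
    exact Set.mem_iUnion.2 ⟨b, hb⟩
  · refine measure_iUnion_null fun b => ?_
    rw [← Measure.map_apply measurable_snd (measurable_prodMk_left hA)]
    exact h' b

lemma marg_bool {β : Type*} [MeasurableSpace β] (ν : Measure (Bool × β)) [IsProbabilityMeasure ν]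
    (h0 : ∀ b, ν.map Prod.fst {b} ≠ 0) :
    ∀ᵐ y ∂(ν.map Prod.snd), ∑ b, ν.rnDeriv ((ν.map Prod.fst).prod (ν.map Prod.snd)) (b, y) *
      ν.map Prod.fst {b} = 1 := by
  have : IsProbabilityMeasure (ν.map Prod.fst) := Measure.isProbabilityMeasure_map (by fun_prop)
  have : IsProbabilityMeasure (ν.map Prod.snd) := Measure.isProbabilityMeasure_map (by fun_prop)
  have hac := ac_bool ν h0
  refine ae_eq_of_forall_setLIntegral_eq_of_sigmaFinite (g := fun _ => 1) (by fun_prop)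
    (by fun_prop) fun s hs _ => ?_
  have h := Measure.setLIntegral_rnDeriv hac (Set.univ ×ˢ s)
  rw [setLIntegral_prod_symm _ (by fun_prop)] at h
  simp only [Measure.restrict_univ, lintegral_fintype] at h
  rw [h, setLIntegral_one, Measure.map_apply measurable_snd hs]
  congr 1; ext; simp

end

lemma card_S (u n : ℕ) : (Finset.univ.filter
      (fun f : Fin u → Bool => (Finset.univ.filter (fun i => f i = true)).card = n)).card
      = u.choose n := by
  have h := Finset.card_powersetCard n (Finset.univ : Finset (Fin u))
  rw [Finset.card_univ, Fintype.card_fin] at h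
  rw [← h]
  refine Finset.card_bij' (fun f _ => Finset.univ.filter (fun i => f i = true))
    (fun s _ i => decide (i ∈ s)) ?_ ?_ ?_ ?_
  · intro f hf
    simpa [Finset.mem_powersetCard] using hf
  · intro s hs
    simpa [Finset.mem_powersetCard] using hs
  · intro f hf
    ext i
    simp
  · intro s hs
    ext i
    simp

section
variable {u : ℕ} {Ω : Type*} [MeasurableSpace Ω] (μ : Measure Ω) [IsProbabilityMeasure μ]
    (X : Ω → (Fin u → Bool)) (Xh : Ω → (Fin u → I01))

lemma nu_eq (hX : Measurable X) (hXh : Measurable Xh) :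
    Measure.map (fun q : Ω × Fin u => (X q.1 q.2, Xh q.1 q.2))
      (μ.prod (((u : ℝ≥0∞))⁻¹ • Measure.count)) =
    (u : ℝ≥0∞)⁻¹ • ∑ i, Measure.map (fun ω => (X ω i, Xh ω i)) μ := by
  have hm : ∀ i, Measurable (fun ω => (X ω i, Xh ω i)) := fun i => by fun_prop
  have hm2 : Measurable (fun q : Ω × Fin u => (X q.1 q.2, Xh q.1 q.2)) :=
    measurable_from_prod_countable_left hm
  ext A hA
  rw [Measure.map_apply hm2 hA, Measure.prod_apply_symm (hm2 hA)]
  simp only [lintegral_smul_measure, lintegral_count, tsum_fintype, Measure.smul_apply,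
    Measure.finsetSum_apply, smul_eq_mul]
  congr 1
  refine Finset.sum_congr rfl fun i _ => ?_
  rw [Measure.map_apply (hm i) hA]
  rfl

lemma fst_eq (hX : Measurable X) (hXh : Measurable Xh) (b : Bool) (k : ℕ)
    (hk : ∀ᵐ ω ∂μ, (Finset.univ.filter (fun i => X ω i = b)).card = k) :
    (((u : ℝ≥0∞)⁻¹ • ∑ i, Measure.map (fun ω => (X ω i, Xh ω i)) μ).map Prod.fst) {b}
      = (u : ℝ≥0∞)⁻¹ * k := by
  have hm : ∀ i, Measurable (fun ω => (X ω i, Xh ω i)) := fun i => by fun_prop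
  have hmX : ∀ i, Measurable (fun ω => X ω i) := fun i => by fun_prop
  rw [Measure.map_apply measurable_fst (by simp)]
  simp only [Measure.smul_apply, Measure.finsetSum_apply, smul_eq_mul]
  congr 1
  calc ∑ i, Measure.map (fun ω => (X ω i, Xh ω i)) μ (Prod.fst ⁻¹' {b})
      = ∑ i, ∫⁻ ω, ((fun ω => X ω i) ⁻¹' {b}).indicator 1 ω ∂μ := by
        refine Finset.sum_congr rfl fun i _ => ?_
        rw [Measure.map_apply (hm i) (measurable_fst (by simp)),
          lintegral_indicator_one (hmX i (by simp))]
        rfl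
    _ = ∫⁻ ω, ∑ i, ((fun ω => X ω i) ⁻¹' {b}).indicator 1 ω ∂μ := by
        rw [lintegral_finsetSum]
        intro i _
        exact measurable_one.indicator (hmX i (by simp))
    _ = ∫⁻ ω, (k : ℝ≥0∞) ∂μ := by
        refine lintegral_congr_ae ?_
        filter_upwards [hk] with ω hω
        rw [← hω, Finset.card_filter, Nat.cast_sum]
        refine Finset.sum_congr rfl fun i _ => ?_
        by_cases h : X ω i = b
        · rw [Set.indicator_of_mem (by exact h), if_pos h]
          simp
        · rw [Set.indicator_of_notMem (by exact h), if_neg h]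
          simp
    _ = k := by simp

end

theorem stmt_19 (u n : ℕ) (hn : 1 ≤ n) (hu : n < u)
    {Ω : Type*} [MeasurableSpace Ω] (μ : Measure Ω) [IsProbabilityMeasure μ]
    (X : Ω → (Fin u → Bool)) (Xh : Ω → (Fin u → I01))
    (hX : Measurable X) (hXh : Measurable Xh)
    -- X is the indicator vector of a uniformly random n-element subset of [u]
    (S : Finset (Fin u → Bool))
    (hS : S = Finset.univ.filter
      (fun f : Fin u → Bool => (Finset.univ.filter (fun i => f i = true)).card = n))
    (hSne : S.Nonempty)
    (hlaw : Measure.map X μ = (PMF.uniformOfFinset S hSne).toMeasure) :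
    -- joint law of (X, X̂) and its marginals
    let joint : Measure ((Fin u → Bool) × (Fin u → I01)) :=
      Measure.map (fun ω => (X ω, Xh ω)) μ
    -- the uniform distribution of the random index I on [u]
    let ι : Measure (Fin u) := ((u : ℝ≥0∞))⁻¹ • Measure.count
    -- joint law of (X_I, X̂_I) under the independent uniform index I
    let ν : Measure (Bool × I01) :=
      Measure.map (fun q : Ω × Fin u => (X q.1 q.2, Xh q.1 q.2)) (μ.prod ι)
    -- I(X; X̂) ≥ u·I(X_I; X̂_I) − (1/2)·log₂(8n)
    klDiv2 joint ((Measure.map X μ).prod (Measure.map Xh μ))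
      ≥ ((u : ℝ) : EReal) * klDiv2 ν ((ν.map Prod.fst).prod (ν.map Prod.snd))
        - ((Real.logb 2 (8 * n) / 2 : ℝ) : EReal) := by
  intro joint ι ν
  by_cases hL : joint ≪ ((Measure.map X μ).prod (Measure.map Xh μ)) ∧
      Integrable (fun x => Real.logb 2
        ((joint.rnDeriv ((Measure.map X μ).prod (Measure.map Xh μ)) x).toReal)) joint
  swap
  · have : klDiv2 joint ((Measure.map X μ).prod (Measure.map Xh μ)) = ⊤ := if_neg hL
    rw [this]
    exact le_top
  have hu0 : (u : ℝ≥0∞) ≠ 0 := by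
    have : u ≠ 0 := by omega
    exact_mod_cast this
  have huR : (0 : ℝ) < u := by
    have : 0 < u := by omega
    exact_mod_cast this
  have hut : (u : ℝ≥0∞) ≠ ∞ := ENNReal.natCast_ne_top u
  have hm : ∀ i, Measurable (fun ω => (X ω i, Xh ω i)) := fun i => by fun_prop
  have hm2 : Measurable (fun q : Ω × Fin u => (X q.1 q.2, Xh q.1 q.2)) :=
    measurable_from_prod_countable_left hm
  have hmJ : Measurable (fun ω => (X ω, Xh ω)) := by fun_prop
  have hν : ν = (u : ℝ≥0∞)⁻¹ • ∑ i, Measure.map (fun ω => (X ω i, Xh ω i)) μ :=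
    nu_eq μ X Xh hX hXh
  have hJp : IsProbabilityMeasure joint := Measure.isProbabilityMeasure_map hmJ.aemeasurable
  have hPp : IsProbabilityMeasure (Measure.map X μ) :=
    Measure.isProbabilityMeasure_map hX.aemeasurable
  have hQp : IsProbabilityMeasure (Measure.map Xh μ) :=
    Measure.isProbabilityMeasure_map hXh.aemeasurable
  have hρp : ∀ i, IsProbabilityMeasure (Measure.map (fun ω => (X ω i, Xh ω i)) μ) :=
    fun i => Measure.isProbabilityMeasure_map (hm i).aemeasurable
  have hνp : IsProbabilityMeasure ν := by
    constructor
    rw [hν]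
    simp [ENNReal.inv_mul_cancel hu0 hut]
  have hρac : ∀ i, Measure.map (fun ω => (X ω i, Xh ω i)) μ ≪ ν := by
    intro i
    rw [hν]
    refine Measure.AbsolutelyContinuous.mk fun A _ hA => ?_
    simp only [Measure.smul_apply, Measure.finsetSum_apply, smul_eq_mul, mul_eq_zero,
      ENNReal.inv_eq_zero, hut, false_or] at hA
    exact (Finset.sum_eq_zero_iff.1 hA) i (Finset.mem_univ i)
  have hPx : ∀ x, Measure.map X μ {x} = if x ∈ S then (S.card : ℝ≥0∞)⁻¹ else 0 := by
    intro x
    rw [hlaw, PMF.toMeasure_apply_singleton _ _ (by simp), PMF.uniformOfFinset_apply]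
    congr
  have hXS : ∀ᵐ ω ∂μ, X ω ∈ S := by
    refine ae_of_ae_map (p := fun x => x ∈ S) hX.aemeasurable ?_
    rw [ae_iff_of_countable]
    intro x hx
    by_contra hxS
    exact hx (by rw [hPx, if_neg hxS])
  have hcard : ∀ x ∈ S, (Finset.univ.filter (fun i => x i = true)).card = n := by
    intro x hx
    rw [hS] at hx
    simpa using hx
  have hcard' : ∀ x ∈ S, (Finset.univ.filter (fun i => x i = false)).card = u - n := by
    intro x hx
    have h1 := hcard x hx
    have h2 := Finset.card_filter_add_card_filter_not (s := (Finset.univ : Finset (Fin u)))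
      (fun i => x i = true)
    simp only [Bool.not_eq_true, Finset.card_univ, Fintype.card_fin] at h2
    omega
  have hν1t : ν.map Prod.fst {true} = (u : ℝ≥0∞)⁻¹ * n := by
    rw [hν]
    exact fst_eq μ X Xh hX hXh true n (hXS.mono fun ω h => hcard _ h)
  have hν1f : ν.map Prod.fst {false} = (u : ℝ≥0∞)⁻¹ * (u - n : ℕ) := by
    rw [hν]
    exact fst_eq μ X Xh hX hXh false (u - n) (hXS.mono fun ω h => hcard' _ h)
  have h0 : ∀ b, ν.map Prod.fst {b} ≠ 0 := by
    intro b
    cases b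
    · rw [hν1f]
      have : ((u - n : ℕ) : ℝ≥0∞) ≠ 0 := by
        have : u - n ≠ 0 := by omega
        exact_mod_cast this
      exact mul_ne_zero (ENNReal.inv_ne_zero.2 hut) this
    · rw [hν1t]
      have : (n : ℝ≥0∞) ≠ 0 := by
        have : n ≠ 0 := by omega
        exact_mod_cast this
      exact mul_ne_zero (ENNReal.inv_ne_zero.2 hut) this
  have hac := ac_bool ν h0
  have hmarg := marg_bool ν h0
  have hν1p : IsProbabilityMeasure (ν.map Prod.fst) :=
    Measure.isProbabilityMeasure_map (by fun_prop)
  have hν2p : IsProbabilityMeasure (ν.map Prod.snd) :=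
    Measure.isProbabilityMeasure_map (by fun_prop)
  set r : Bool × I01 → ℝ≥0∞ := ν.rnDeriv ((ν.map Prod.fst).prod (ν.map Prod.snd)) with hr
  have hrm : Measurable r := Measure.measurable_rnDeriv _ _
  have hrb : ∀ᵐ x ∂ν, r x ≤ ∑ b, (ν.map Prod.fst {b})⁻¹ := by
    filter_upwards [ae_of_ae_map (by fun_prop) hmarg] with x hx
    have h1 : r x * ν.map Prod.fst {x.1} ≤ 1 := by
      rw [← hx]
      exact Finset.single_le_sum (f := fun b => r (b, x.2) * ν.map Prod.fst {b})
        (fun _ _ => zero_le) (Finset.mem_univ x.1)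
    have h2 : r x ≤ (ν.map Prod.fst {x.1})⁻¹ := by
      rw [ENNReal.le_inv_iff_mul_le]
      exact h1
    exact h2.trans (Finset.single_le_sum (f := fun b => (ν.map Prod.fst {b})⁻¹)
        (fun _ _ => zero_le) (Finset.mem_univ x.1))
  have hrint : Integrable (fun x => Real.log (r x).toReal) ν :=
    log_int ν _ hac _ (ENNReal.sum_ne_top.2 fun b _ => ENNReal.inv_ne_top.2 (h0 b)) hrb
  have hrpos : ∀ᵐ x ∂ν, 0 < r x ∧ r x < ∞ := by
    filter_upwards [Measure.rnDeriv_pos hac, hac.ae_le (Measure.rnDeriv_lt_top ν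
      ((ν.map Prod.fst).prod (ν.map Prod.snd)))] with x h1 h2
    exact ⟨h1, h2⟩
  have hrpos' : ∀ᵐ ω ∂μ, ∀ i, 0 < r (X ω i, Xh ω i) ∧ r (X ω i, Xh ω i) < ∞ := by
    rw [ae_all_iff]
    intro i
    exact ae_of_ae_map (hm i).aemeasurable ((hρac i).ae_le hrpos)
  have hri : ∀ i, Integrable (fun x => Real.log (r x).toReal)
      (Measure.map (fun ω => (X ω i, Xh ω i)) μ) := by
    intro i
    rw [hν, integrable_smul_measure (ENNReal.inv_ne_zero.2 hut) (ENNReal.inv_ne_top.2 hu0),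
      integrable_finsetSum_measure] at hrint
    exact hrint i (Finset.mem_univ i)
  have hlogm : Measurable (fun x => Real.log (r x).toReal) := Measurable.log (by fun_prop)
  have hri' : ∀ i, Integrable (fun ω => Real.log (r (X ω i, Xh ω i)).toReal) μ := by
    intro i
    exact (integrable_map_measure hlogm.aestronglyMeasurable (hm i).aemeasurable).1 (hri i)
  have hrsum : ∑ i, ∫ ω, Real.log (r (X ω i, Xh ω i)).toReal ∂μ
      = u * ∫ x, Real.log (r x).toReal ∂ν := by
    have : ∫ x, Real.log (r x).toReal ∂ν = (u : ℝ)⁻¹ *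
        ∑ i, ∫ ω, Real.log (r (X ω i, Xh ω i)).toReal ∂μ := by
      conv_lhs => rw [hν]
      rw [integral_smul_measure, integral_finsetSum_measure (fun i _ => hri i)]
      simp only [ENNReal.toReal_inv, ENNReal.toReal_natCast, smul_eq_mul]
      congr 1
      refine Finset.sum_congr rfl fun i _ => ?_
      rw [integral_map (hm i).aemeasurable hlogm.aestronglyMeasurable]
    rw [this, mul_inv_cancel_left₀ huR.ne']
  set g : (Fin u → Bool) × (Fin u → I01) → ℝ≥0∞ := fun z => ∏ i, r (z.1 i, z.2 i) with hg
  have hgm : Measurable g := by fun_prop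
  have hglog : (fun ω => Real.log (g (X ω, Xh ω)).toReal) =ᵐ[μ]
      fun ω => ∑ i, Real.log (r (X ω i, Xh ω i)).toReal := by
    filter_upwards [hrpos'] with ω hω
    simp only [hg, ENNReal.toReal_prod]
    rw [Real.log_prod]
    intro i _
    exact (ENNReal.toReal_pos (hω i).1.ne' (hω i).2.ne).ne'
  have hglm : Measurable (fun z => Real.log (g z).toReal) := Measurable.log (by fun_prop)
  have hgi : Integrable (fun z => Real.log (g z).toReal) joint := by
    refine (integrable_map_measure hglm.aestronglyMeasurable hmJ.aemeasurable).2 ?_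
    exact (integrable_finsetSum _ fun i _ => hri' i).congr hglog.symm
  have hgval : ∫ z, Real.log (g z).toReal ∂joint = u * ∫ x, Real.log (r x).toReal ∂ν := by
    rw [integral_map hmJ.aemeasurable hglm.aestronglyMeasurable, integral_congr_ae hglog,
      integral_finsetSum _ (fun i _ => hri' i), hrsum]
  have hgpos : ∀ᵐ z ∂joint, 0 < g z ∧ g z < ∞ := by
    refine (ae_map_iff hmJ.aemeasurable ?_).2 ?_
    · exact (measurableSet_lt measurable_const hgm).inter (measurableSet_lt hgm measurable_const)
    filter_upwards [hrpos'] with ω hω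
    refine ⟨?_, ENNReal.prod_lt_top fun i _ => (hω i).2⟩
    exact pos_iff_ne_zero.2 (Finset.prod_ne_zero_iff.2 fun i _ => (hω i).1.ne')
  have hsq : 0 < Real.sqrt (8 * n) := by
    have : (0 : ℝ) < n := by exact_mod_cast hn
    positivity
  have hPle : ∀ x, Measure.map X μ {x} ≤
      ENNReal.ofReal (Real.sqrt (8 * n)) * ∏ i, ν.map Prod.fst {x i} := by
    intro x
    rw [hPx]
    split_ifs with hx
    swap
    · exact zero_le
    have hprod : ∏ i, ν.map Prod.fst {x i} =
        ENNReal.ofReal (((n : ℝ) / u) ^ n * (((u - n : ℕ) : ℝ) / u) ^ (u - n)) := by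
      have e : ∀ k : ℕ, (u : ℝ≥0∞)⁻¹ * k = ENNReal.ofReal ((k : ℝ) / u) := by
        intro k
        rw [ENNReal.ofReal_div_of_pos huR, ENNReal.ofReal_natCast, ENNReal.ofReal_natCast,
          ENNReal.div_eq_inv_mul]
      rw [← Finset.prod_filter_mul_prod_filter_not Finset.univ (fun i => x i = true)]
      rw [Finset.prod_congr rfl (g := fun _ => (u : ℝ≥0∞)⁻¹ * n)
        (fun i hi => by rw [(Finset.mem_filter.1 hi).2, hν1t])]
      rw [Finset.prod_congr (s₁ := Finset.univ.filter (fun i => ¬ x i = true)) rfl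
        (g := fun _ => (u : ℝ≥0∞)⁻¹ * (u - n : ℕ))
        (fun i hi => by rw [Bool.eq_false_iff.2 (Finset.mem_filter.1 hi).2, hν1f])]
      rw [Finset.prod_const, Finset.prod_const, hcard x hx]
      simp only [Bool.not_eq_true]
      rw [hcard' x hx, e, e, ENNReal.ofReal_mul (by positivity), ENNReal.ofReal_pow (by positivity),
        ENNReal.ofReal_pow (by positivity)]
    rw [hprod, ← ENNReal.ofReal_mul hsq.le]
    have hc : S.card = u.choose n := by rw [hS]; exact card_S u n
    have hcp : (0 : ℝ) < (u.choose n : ℕ) := by exact_mod_cast Nat.choose_pos hu.le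
    have hb := binom_lower n (u - n) hn (by omega)
    rw [Nat.add_sub_cancel' hu.le] at hb
    rw [hc, ← ENNReal.ofReal_natCast, ← ENNReal.ofReal_inv_of_pos hcp]
    exact ENNReal.ofReal_le_ofReal hb
  have hgC : ∫⁻ z, g z ∂((Measure.map X μ).prod (Measure.map Xh μ)) ≤
      ENNReal.ofReal (Real.sqrt (8 * n)) := by
    rw [lintegral_prod_symm _ hgm.aemeasurable]
    have hae : ∀ᵐ y ∂(Measure.map Xh μ), ∀ i,
        ∑ b, r (b, y i) * ν.map Prod.fst {b} = 1 := by
      rw [ae_all_iff]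
      intro i
      have h1 : ∀ᵐ z ∂ν, ∑ b, r (b, z.2) * ν.map Prod.fst {b} = 1 :=
        ae_of_ae_map (by fun_prop) hmarg
      have h2 := ae_of_ae_map (hm i).aemeasurable ((hρac i).ae_le h1)
      refine (ae_map_iff hXh.aemeasurable ?_).2 h2
      exact measurableSet_eq_fun (by fun_prop) measurable_const
    calc ∫⁻ y, ∫⁻ x, g (x, y) ∂(Measure.map X μ) ∂(Measure.map Xh μ)
        ≤ ∫⁻ y, ENNReal.ofReal (Real.sqrt (8 * n)) ∂(Measure.map Xh μ) := by
          refine lintegral_mono_ae ?_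
          filter_upwards [hae] with y hy
          rw [lintegral_fintype]
          calc ∑ x, g (x, y) * Measure.map X μ {x}
              ≤ ∑ x : Fin u → Bool, ENNReal.ofReal (Real.sqrt (8 * n)) *
                  ∏ i, (r (x i, y i) * ν.map Prod.fst {x i}) := by
                refine Finset.sum_le_sum fun x _ => ?_
                rw [Finset.prod_mul_distrib, mul_left_comm]
                exact mul_le_mul_right (hPle x) _
            _ = ENNReal.ofReal (Real.sqrt (8 * n)) *
                  ∏ i, ∑ b, (r (b, y i) * ν.map Prod.fst {b}) := by
                rw [← Finset.mul_sum, Finset.prod_univ_sum, Fintype.piFinset_univ]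
            _ = _ := by
                rw [Finset.prod_congr rfl (fun i _ => hy i)]
                simp
      _ = _ := by simp
  have hl2 : (0 : ℝ) < Real.log 2 := Real.log_pos (by norm_num)
  have hLint : Integrable (fun x => Real.log
      ((joint.rnDeriv ((Measure.map X μ).prod (Measure.map Xh μ)) x).toReal)) joint := by
    refine (hL.2.mul_const (Real.log 2)).congr (Eventually.of_forall fun x => ?_)
    simp only [Real.logb]
    field_simp
  have hfin := gibbs joint _ hL.1 hLint g hgm hgpos hgi _ hsq hgC
  have hR : ν ≪ (ν.map Prod.fst).prod (ν.map Prod.snd) ∧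
      Integrable (fun x => Real.logb 2 (r x).toReal) ν := by
    refine ⟨hac, ?_⟩
    simp only [Real.logb]
    exact hrint.div_const _
  have e1 : klDiv2 joint ((Measure.map X μ).prod (Measure.map Xh μ)) = ((∫ x, Real.logb 2
      ((joint.rnDeriv ((Measure.map X μ).prod (Measure.map Xh μ)) x).toReal) ∂joint : ℝ) : EReal) :=
    if_pos hL
  have e2 : klDiv2 ν ((ν.map Prod.fst).prod (ν.map Prod.snd)) =
      ((∫ x, Real.logb 2 (r x).toReal ∂ν : ℝ) : EReal) := if_pos hR
  rw [e1, e2, ge_iff_le, ← EReal.coe_mul, ← EReal.coe_sub, EReal.coe_le_coe_iff]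
  simp only [Real.logb]
  rw [integral_div, integral_div]
  rw [hgval, Real.log_sqrt (by positivity)] at hfin
  calc _ = (u * ∫ x, Real.log (r x).toReal ∂ν - Real.log (8 * n) / 2) / Real.log 2 := by ring
    _ ≤ _ := by gcongr
end
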